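/- arXiv:2412.04066 — 11 statements merged into one kernel-verified Lean document; each statement's English description precedes it below -/
import Mathlib

section
/- Let q ≥ 1 be an integer and let H be a q-uniform hypergraph on a vertex set V that satisfies the fractional Helly property. If H has arbitrarily large finite independent sets (i.e., for every natural number n there exists a finite independent set of H of size at least n), then H has an infinite independent set. -/
/-- `H` is a `q`-uniform hypergraph on vertex set `V`: every edge has exactly `q` vertices. -/
def IsUniform {V : Type*} (q : ℕ) (H : Set (Finset V)) : Prop :=
  ∀ e ∈ H, e.card = q

/-- `K` is a clique of the `q`-uniform hypergraph `H`:
every `q`-element subset of `K` is an edge. -/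
def IsClique {V : Type*} (q : ℕ) (H : Set (Finset V)) (K : Finset V) : Prop :=
  ∀ e : Finset V, e ⊆ K → e.card = q → e ∈ H

/-- `I` is an independent set of the `q`-uniform hypergraph `H`:
no `q`-element subset of `I` is an edge. -/
def IsIndep {V : Type*} (q : ℕ) (H : Set (Finset V)) (I : Set V) : Prop :=
  ∀ e : Finset V, ↑e ⊆ I → e.card = q → e ∉ H

/-- The fractional Helly property for a `q`-uniform hypergraph `H`: for every `α > 0`
there is a `β > 0` such that every finite vertex set `S` containing at least
`α·(|S| choose q)` edges contains a clique of size at least `β·|S|`. -/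
def FracHelly {V : Type*} (q : ℕ) (H : Set (Finset V)) : Prop :=
  ∀ α : ℝ, 0 < α → ∃ β : ℝ, 0 < β ∧ ∀ S : Finset V,
    α * (S.card.choose q : ℝ) ≤ ({e : Finset V | e ∈ H ∧ e ⊆ S}.ncard : ℝ) →
    ∃ K : Finset V, K ⊆ S ∧ IsClique q H K ∧ β * (S.card : ℝ) ≤ (K.card : ℝ)

/-- A set of vertices is large if it contains arbitrarily large finite independent sets. -/
def LargeSet {V : Type*} (q : ℕ) (H : Set (Finset V)) (A : Set V) : Prop :=
  ∀ n : ℕ, ∃ I : Finset V, ↑I ⊆ A ∧ IsIndep q H ↑I ∧ n ≤ I.card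

theorem IsIndep.mono' {V : Type*} {q : ℕ} {H : Set (Finset V)} {A B : Set V}
    (h : IsIndep q H B) (hAB : A ⊆ B) : IsIndep q H A :=
  fun e he hc => h e (he.trans hAB) hc

theorem LargeSet.union {V : Type*} {q : ℕ} {H : Set (Finset V)} {A B : Set V}
    (h : LargeSet q H (A ∪ B)) : LargeSet q H A ∨ LargeSet q H B := by
  classical
  by_contra hcon
  push Not at hcon
  obtain ⟨hA, hB⟩ := hcon
  unfold LargeSet at hA hB
  push Not at hA hB
  obtain ⟨a, ha⟩ := hA
  obtain ⟨b, hb⟩ := hB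
  obtain ⟨I, hI, hind, hc⟩ := h (a + b)
  have h1 := ha (I.filter (· ∈ A)) (by intro x hx; simp at hx; exact hx.2)
    (hind.mono' (by intro x hx; simp at hx; exact hx.1))
  have h2 := hb (I.filter (¬ · ∈ A))
    (by
      intro x hx
      simp at hx
      rcases hI hx.1 with h | h
      · exact absurd h hx.2
      · exact h)
    (hind.mono' (by intro x hx; simp at hx; exact hx.1))
  have h3 := Finset.card_filter_add_card_filter_not (s := I) (fun x => x ∈ A)
  omega

theorem LargeSet.mono {V : Type*} {q : ℕ} {H : Set (Finset V)} {A B : Set V}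
    (h : LargeSet q H A) (hAB : A ⊆ B) : LargeSet q H B := by
  intro n
  obtain ⟨I, h1, h2⟩ := h n
  exact ⟨I, h1.trans hAB, h2⟩

theorem not_large_finset {V : Type*} {q : ℕ} {H : Set (Finset V)} (S : Finset V) :
    ¬ LargeSet q H (S : Set V) := by
  intro h
  obtain ⟨I, h1, _, h2⟩ := h (S.card + 1)
  have := Finset.card_le_card (Finset.coe_subset.1 h1)
  omega

theorem exists_ultra {V : Type*} {q : ℕ} {H : Set (Finset V)} (h : LargeSet q H Set.univ) :
    ∃ U : Ultrafilter V, ∀ A ∈ U, LargeSet q H A := by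
  let F : Filter V :=
    { sets := {A | ¬ LargeSet q H Aᶜ}
      univ_sets := by
        have := not_large_finset (q := q) (H := H) (∅ : Finset V)
        simpa using this
      sets_of_superset := by
        intro A B hA hAB hB
        exact hA (hB.mono (Set.compl_subset_compl.2 hAB))
      inter_sets := by
        intro A B hA hB hAB
        rw [Set.compl_inter] at hAB
        exact hAB.union.elim hA hB }
  have hF : F.NeBot := by
    rw [Filter.neBot_iff]
    intro hbot
    have : (∅ : Set V) ∈ F := by rw [hbot]; trivial
    have h2 : ¬ LargeSet q H (∅ : Set V)ᶜ := this
    rw [Set.compl_empty] at h2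
    exact h2 h
  refine ⟨Ultrafilter.of F, fun A hA => ?_⟩
  by_contra hn
  have h1 : Aᶜ ∈ F := by
    change ¬ LargeSet q H Aᶜᶜ
    rwa [compl_compl]
  have h2 := Ultrafilter.of_le F h1
  exact (Ultrafilter.compl_mem_iff_notMem.1 h2) hA

open Classical in
/-- Iterated ultrafilter quantifier. -/
def IterP {V : Type*} (H : Set (Finset V)) (U : Ultrafilter V) : ℕ → Finset V → Prop
  | 0, e => e ∈ H
  | k + 1, e => ∀ᶠ x in (U : Filter V), IterP H U k (insert x e)

open Classical in
theorem not_iterP_succ {V : Type*} {H : Set (Finset V)} {U : Ultrafilter V} {k : ℕ}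
    {e : Finset V} (h : ¬ IterP H U (k + 1) e) :
    ∀ᶠ x in (U : Filter V), ¬ IterP H U k (insert x e) :=
  Ultrafilter.eventually_not.2 h

theorem ev_notMem {V : Type*} {q : ℕ} {H : Set (Finset V)} {U : Ultrafilter V}
    (hU : ∀ A ∈ U, LargeSet q H A) (S : Finset V) : ∀ᶠ x in (U : Filter V), x ∉ S := by
  refine Ultrafilter.eventually_not.2 fun h => ?_
  exact not_large_finset S (hU _ h)

open Classical in
theorem build_parts {V : Type*} {q : ℕ} (hq : 1 ≤ q) {H : Set (Finset V)} {U : Ultrafilter V}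
    (hU : ∀ A ∈ U, LargeSet q H A) (hP : IterP H U q ∅) (t : ℕ) (j : ℕ) (hj : j ≤ q) :
    ∃ (S : Finset V) (T : Finset (Finset V)), S.card = j * t ∧ T.card = t ^ j ∧
      (∀ e ∈ T, e ⊆ S ∧ IterP H U (q - j) e) ∧
      ∀ K ⊆ S, IsClique q H K → K.card ≤ j * (q - 1) := by
  induction j with
  | zero =>
    refine ⟨∅, {∅}, by simp, by simp, by simpa using hP, ?_⟩
    intro K hK _
    simp [Finset.subset_empty.1 hK]
  | succ j ih =>
    obtain ⟨S, T, hS, hT, hTP, hK⟩ := ih (by omega)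
    have hev : ∀ᶠ x in (U : Filter V), x ∉ S ∧ ∀ e ∈ T, IterP H U (q - (j + 1)) (insert x e) := by
      refine (ev_notMem hU S).and ?_
      rw [Filter.eventually_all_finset]
      intro e he
      have := (hTP e he).2
      rw [show q - j = (q - (j + 1)) + 1 by omega] at this
      exact this
    obtain ⟨I0, hI0, hind0, hc0⟩ := hU _ hev t
    obtain ⟨I, hII, hIc⟩ := Finset.exists_subset_card_eq hc0
    have hIA : ∀ x ∈ I, x ∉ S ∧ ∀ e ∈ T, IterP H U (q - (j + 1)) (insert x e) :=
      fun x hx => hI0 (hII hx)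
    have hind : IsIndep q H (I : Set V) := hind0.mono' (Finset.coe_subset.2 hII)
    refine ⟨S ∪ I, (I ×ˢ T).image (fun p => insert p.1 p.2), ?_, ?_, ?_, ?_⟩
    · rw [Finset.card_union_of_disjoint, hS, hIc]
      · ring
      · rw [Finset.disjoint_right]
        exact fun x hx => (hIA x hx).1
    · rw [Finset.card_image_of_injOn, Finset.card_product, hIc, hT]
      · ring
      · rintro ⟨x, e⟩ hxe ⟨y, f⟩ hyf heq
        simp only [Finset.coe_product, Set.mem_prod, Finset.mem_coe] at hxe hyf
        simp only at heq
        have hx := (hIA x hxe.1).1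
        have hy := (hIA y hyf.1).1
        have he := (hTP e hxe.2).1
        have hf := (hTP f hyf.2).1
        have hxy : x = y := by
          have : x ∈ insert y f := heq ▸ Finset.mem_insert_self x e
          rcases Finset.mem_insert.1 this with h | h
          · exact h
          · exact absurd (hf h) hx
        subst hxy
        have : e = f := by
          rw [← Finset.erase_insert (fun h => hx (he h)), heq,
            Finset.erase_insert (fun h => hx (hf h))]
        rw [this]
    · intro e he
      simp only [Finset.mem_image, Finset.mem_product, Prod.exists] at he
      obtain ⟨x, f, ⟨hx, hf⟩, rfl⟩ := he
      refine ⟨?_, (hIA x hx).2 f hf⟩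
      rw [Finset.insert_subset_iff]
      exact ⟨Finset.mem_union_right _ hx, (hTP f hf).1.trans Finset.subset_union_left⟩
    · intro K hKS hKc
      have h1 : (K ∩ S).card ≤ j * (q - 1) :=
        hK _ Finset.inter_subset_right
          (fun e he hc => hKc e (he.trans Finset.inter_subset_left) hc)
      have h2 : (K ∩ I).card < q := by
        by_contra hge
        push Not at hge
        obtain ⟨e, he, hec⟩ := Finset.exists_subset_card_eq hge
        exact hind e (Finset.coe_subset.2 (he.trans Finset.inter_subset_right)) hec
          (hKc e (he.trans Finset.inter_subset_left) hec)
      have h3 : K = (K ∩ S) ∪ (K ∩ I) := by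
        rw [← Finset.inter_union_distrib_left, Finset.inter_eq_left.2 hKS]
      have h4 : K.card ≤ (K ∩ S).card + (K ∩ I).card := by
        conv_lhs => rw [h3]
        exact Finset.card_union_le _ _
      rw [add_mul, one_mul]
      omega

theorem not_iterP_empty {V : Type*} {q : ℕ} (hq : 1 ≤ q) {H : Set (Finset V)}
    {U : Ultrafilter V} (hfh : FracHelly q H)
    (hU : ∀ A ∈ U, LargeSet q H A) : ¬ IterP H U q ∅ := by
  intro hP
  have hq0 : (0 : ℝ) < q := by exact_mod_cast hq
  obtain ⟨β, hβ, hS⟩ := hfh (1 / (q : ℝ) ^ q) (by positivity)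
  obtain ⟨t, ht⟩ := exists_nat_gt (((q - 1 : ℕ) : ℝ) / β)
  obtain ⟨S, T, hSc, hTc, hTP, hK⟩ := build_parts hq hU hP t q le_rfl
  obtain ⟨K, hKS, hKc, hKl⟩ := hS S (by
    have h1 : T.card ≤ {e : Finset V | e ∈ H ∧ e ⊆ S}.ncard := by
      rw [← Set.ncard_coe_finset]
      apply Set.ncard_le_ncard
      · intro e he
        have := hTP e he
        rw [Nat.sub_self] at this
        exact ⟨this.2, this.1⟩
      · refine (Finset.finite_toSet S.powerset).subset ?_
        intro e he
        simpa using he.2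
    have h2 : (S.card.choose q : ℝ) ≤ ((q : ℝ) * t) ^ q := by
      rw [hSc]
      exact_mod_cast Nat.choose_le_pow (q * t) q
    have h3 : ((T.card : ℕ) : ℝ) = (t : ℝ) ^ q := by rw [hTc]; push_cast; rfl
    calc 1 / (q : ℝ) ^ q * (S.card.choose q : ℝ) ≤ 1 / (q : ℝ) ^ q * ((q : ℝ) * t) ^ q := by
          gcongr
      _ = (t : ℝ) ^ q := by rw [mul_pow]; field_simp
      _ ≤ _ := by rw [← h3]; exact_mod_cast h1)
  have h1 : (K.card : ℝ) ≤ q * ((q - 1 : ℕ) : ℝ) := by exact_mod_cast hK K hKS hKc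
  rw [hSc] at hKl
  push_cast at hKl
  rw [div_lt_iff₀ hβ] at ht
  have h2 := mul_lt_mul_of_pos_left ht hq0
  nlinarith

open Classical in
theorem infinite_of_not_iterP {V : Type*} {q : ℕ} {H : Set (Finset V)}
    {U : Ultrafilter V} (hU : ∀ A ∈ U, LargeSet q H A) (hP : ¬ IterP H U q ∅) :
    ∃ I : Set V, I.Infinite ∧ IsIndep q H I := by
  let Good : Set (Set V) :=
    {I | ∀ e : Finset V, ↑e ⊆ I → e.card ≤ q → ¬ IterP H U (q - e.card) e}
  have h0 : (∅ : Set V) ∈ Good := by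
    intro e he _
    have : e = ∅ := by
      rw [← Finset.coe_eq_empty]
      exact Set.subset_empty_iff.1 he
    subst this
    simpa using hP
  obtain ⟨I, -, hI⟩ := zorn_subset_nonempty Good (by
    intro c hc hch hne
    refine ⟨⋃₀ c, ?_, fun s hs => Set.subset_sUnion_of_mem hs⟩
    intro e he hcard
    obtain ⟨s, hs, hes⟩ := DirectedOn.exists_mem_subset_of_finset_subset_biUnion (f := id)
      hne (hch.directedOn) (s := e) (by rwa [Set.sUnion_eq_biUnion] at he)
    exact hc hs e hes hcard) ∅ h0
  refine ⟨I, ?_, ?_⟩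
  · intro hfin
    obtain ⟨S, rfl⟩ := hfin.exists_finset_coe
    have hg := hI.prop
    have hev : ∀ᶠ x in (U : Filter V), x ∉ S ∧
        ∀ e ∈ S.powerset, e.card < q → ¬ IterP H U (q - (e.card + 1)) (insert x e) := by
      refine (ev_notMem hU S).and ?_
      rw [Filter.eventually_all_finset]
      intro e he
      by_cases hc : e.card < q
      · have h1 := hg e (Finset.coe_subset.2 (Finset.mem_powerset.1 he)) hc.le
        rw [show q - e.card = (q - (e.card + 1)) + 1 by omega] at h1
        filter_upwards [not_iterP_succ h1] with x hx _ using hx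
      · exact Filter.Eventually.of_forall fun x h => absurd h hc
    obtain ⟨x, hxS, hx⟩ := hev.exists
    have hg2 : (insert x (S : Set V)) ∈ Good := by
      intro e he hc
      by_cases hxe : x ∈ e
      · have h1 := hx (e.erase x) (by
          rw [Finset.mem_powerset]
          intro y hy
          rw [Finset.mem_erase] at hy
          rcases he hy.2 with h | h
          · exact absurd h hy.1
          · exact h)
        have h2 := Finset.card_erase_add_one hxe
        rw [Finset.insert_erase hxe, h2] at h1
        exact h1 (by omega)
      · refine hg e ?_ hc
        intro y hy
        rcases he hy with h | h
        · exact absurd (h ▸ hy) hxe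
        · exact h
    exact hxS (hI.le_of_ge hg2 (Set.subset_insert _ _) (Set.mem_insert _ _))
  · intro e he hc heH
    have := hI.prop e he hc.le
    rw [hc, Nat.sub_self] at this
    exact this heH

/-- If a `q`-uniform hypergraph satisfies the fractional Helly property
and has arbitrarily large finite independent sets, then it has an infinite independent set. -/
theorem stmt_0 {V : Type*} (q : ℕ) (hq : 1 ≤ q) (H : Set (Finset V))
    (huni : IsUniform q H) (hfh : FracHelly q H)
    (hind : ∀ n : ℕ, ∃ I : Finset V, IsIndep q H ↑I ∧ n ≤ I.card) :
    ∃ I : Set V, I.Infinite ∧ IsIndep q H I := by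
  have hL : LargeSet q H Set.univ := by
    intro n
    obtain ⟨I, h⟩ := hind n
    exact ⟨I, Set.subset_univ _, h⟩
  obtain ⟨U, hU⟩ := exists_ultra hL
  exact infinite_of_not_iterP hU (not_iterP_empty hq hfh hU)
end

section
/- Let q ≥ 1 be an integer and let H be a q-uniform hypergraph on a vertex set V. Suppose β > 0 is a real number witnessing the fractional Helly property of H for α = q!/q^q, i.e., for every finite subset S of V, if the number of edges of H contained in S is at least (q!/q^q)·(|S| choose q), then S contains a clique of H of size at least β·|S|. Then for every integer t with t ≥ q and t > (q-1)/β, H contains no M_q^{(q)}(t)-configuration. -/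
/-- `Vs` is an `M_s^{(q)}(t)`-configuration in `H`: `s` pairwise disjoint `t`-element
independent sets such that every `q`-element vertex set meeting each part in at most one
vertex, with all its vertices in the union of the parts, is an edge. -/
def IsMConfig {V : Type*} (q s t : ℕ) (H : Set (Finset V)) (Vs : Fin s → Finset V) : Prop :=
  (∀ i j, i ≠ j → Disjoint (Vs i) (Vs j)) ∧
  (∀ i, (Vs i).card = t) ∧
  (∀ i, IsIndep q H ↑(Vs i)) ∧
  (∀ e : Finset V, e.card = q → (∀ x ∈ e, ∃ i, x ∈ Vs i) →
    (∀ i, ∀ x ∈ e, ∀ y ∈ e, x ∈ Vs i → y ∈ Vs i → x = y) → e ∈ H)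

/-- If `β > 0` witnesses the fractional Helly property of the `q`-uniform
hypergraph `H` for `α = q!/q^q`, then for every `t ≥ q` with `t > (q-1)/β`, `H` contains
no `M_q^{(q)}(t)`-configuration. -/
theorem stmt_1 {V : Type*} (q : ℕ) (hq : 1 ≤ q) (H : Set (Finset V))
    (huni : IsUniform q H) (β : ℝ) (hβ : 0 < β)
    (hfh : ∀ S : Finset V,
      ((q.factorial : ℝ) / ((q : ℝ) ^ q)) * (S.card.choose q : ℝ)
          ≤ ({e : Finset V | e ∈ H ∧ e ⊆ S}.ncard : ℝ) →
      ∃ K : Finset V, K ⊆ S ∧ IsClique q H K ∧ β * (S.card : ℝ) ≤ (K.card : ℝ))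
    (t : ℕ) (htq : q ≤ t) (htβ : ((q : ℝ) - 1) / β < (t : ℝ)) :
    ¬ ∃ Vs : Fin q → Finset V, IsMConfig q q t H Vs := by
  classical
  rintro ⟨Vs, hdisj, hcard, hind, hedge⟩
  have huniq : ∀ i j x, x ∈ Vs i → x ∈ Vs j → i = j := by
    intro i j x hi hj
    by_contra hne
    exact Finset.disjoint_left.mp (hdisj i j hne) hi hj
  set S : Finset V := Finset.univ.biUnion Vs with hS
  have hScard : S.card = q * t := by
    rw [hS, Finset.card_biUnion (fun i _ j _ h => hdisj i j h)]
    simp [hcard]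
  have hqpos : (0 : ℝ) < q := by exact_mod_cast hq
  -- count edges
  have hcount : t ^ q ≤ {e : Finset V | e ∈ H ∧ e ⊆ S}.ncard := by
    have h1 : ((Fintype.piFinset Vs).image (fun f => Finset.univ.image f)).card = t ^ q := by
      rw [Finset.card_image_of_injOn]
      · simp [Fintype.card_piFinset, hcard]
      · intro f hf g hg hfg
        simp only [Finset.mem_coe, Fintype.mem_piFinset] at hf hg
        funext i
        have : f i ∈ Finset.univ.image g := by
          have h2 : f i ∈ Finset.univ.image f := Finset.mem_image_of_mem f (Finset.mem_univ i)
          have h3 : Finset.univ.image f = Finset.univ.image g := hfg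
          rwa [h3] at h2
        obtain ⟨j, -, hj⟩ := Finset.mem_image.mp this
        have hij : j = i := huniq j i (g j) (hg j) (hj ▸ hf i)
        subst hij
        exact hj.symm
    rw [← h1, ← Set.ncard_coe_finset]
    refine Set.ncard_le_ncard ?_ ?_
    · intro e he
      simp only [Finset.coe_image, Set.mem_image, Finset.mem_coe, Fintype.mem_piFinset] at he
      obtain ⟨f, hf, rfl⟩ := he
      refine ⟨hedge _ ?_ ?_ ?_, ?_⟩
      · rw [Finset.card_image_of_injective]
        · simp
        · intro a b hab
          exact huniq a b (f a) (hf a) (hab ▸ hf b)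
      · intro x hx
        obtain ⟨i, -, rfl⟩ := Finset.mem_image.mp hx
        exact ⟨i, hf i⟩
      · intro i x hx y hy hxi hyi
        obtain ⟨a, -, rfl⟩ := Finset.mem_image.mp hx
        obtain ⟨b, -, rfl⟩ := Finset.mem_image.mp hy
        rw [huniq a i _ (hf a) hxi, huniq b i _ (hf b) hyi]
      · intro x hx
        obtain ⟨i, -, rfl⟩ := Finset.mem_image.mp hx
        exact Finset.mem_biUnion.mpr ⟨i, Finset.mem_univ i, hf i⟩
    · refine Set.Finite.subset (Finset.finite_toSet S.powerset) ?_
      intro e he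
      simpa using he.2
  obtain ⟨K, hKS, hK, hKc⟩ := hfh S (by
    refine le_trans ?_ (show ((t ^ q : ℕ) : ℝ) ≤ _ by exact_mod_cast hcount)
    have h1 : (S.card.choose q : ℝ) ≤ (S.card : ℝ) ^ q / (q.factorial : ℝ) :=
      Nat.choose_le_pow_div q S.card
    have hf : (0 : ℝ) < q.factorial := by exact_mod_cast q.factorial_pos
    calc _ ≤ ((q.factorial : ℝ) / ((q : ℝ) ^ q)) * ((S.card : ℝ) ^ q / (q.factorial : ℝ)) := by
          gcongr
      _ = _ := by
          rw [hScard]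
          push_cast
          rw [mul_pow]
          field_simp)
  have hbig : q * (q - 1) < K.card := by
    have h1 : (q : ℝ) - 1 < t * β := (div_lt_iff₀ hβ).mp htβ
    rw [hScard] at hKc
    push_cast at hKc
    have h2 : (q : ℝ) * ((q : ℝ) - 1) < K.card := by
      have := mul_lt_mul_of_pos_left h1 hqpos
      nlinarith
    have h3 : ((q * (q - 1) : ℕ) : ℝ) < K.card := by
      push_cast [Nat.cast_sub hq]
      exact h2
    exact_mod_cast h3
  have hpart : ∃ i, q ≤ (K ∩ Vs i).card := by
    by_contra hcon
    push Not at hcon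
    have hsub : K ⊆ Finset.univ.biUnion (fun i => K ∩ Vs i) := by
      intro x hx
      obtain ⟨i, -, hi⟩ := Finset.mem_biUnion.mp (hKS hx)
      exact Finset.mem_biUnion.mpr ⟨i, Finset.mem_univ i, Finset.mem_inter.mpr ⟨hx, hi⟩⟩
    have h1 := (Finset.card_le_card hsub).trans
      (Finset.card_biUnion_le_card_mul _ _ (q - 1) (fun i _ => Nat.le_sub_one_of_lt (hcon i)))
    simp only [Finset.card_univ, Fintype.card_fin] at h1
    omega
  obtain ⟨i, hi⟩ := hpart
  obtain ⟨e, he, hec⟩ := Finset.exists_subset_card_eq hi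
  refine hind i e ?_ hec (hK e (he.trans Finset.inter_subset_left) hec)
  exact_mod_cast he.trans Finset.inter_subset_right
end

section
/- Let q ≥ 2 be an integer, let V be a countably infinite set partitioned into q-element blocks B_1, B_2, …, and let H be the q-uniform hypergraph on V whose edges are exactly the q-element subsets of V that are not equal to any block B_n (the complement of an infinite matching). Then: (1) every finite subset S of V contains a clique of H of size at least ((q-1)/q)·|S|, and consequently H satisfies the fractional Helly property; and (2) for every integer s ≥ q, H contains an M_s^{(q)}(q)-configuration. -/
/-- Let `V` be countably infinite, partitioned into `q`-element blocks
`B 0, B 1, …`, and let `H` be the `q`-uniform hypergraph whose edges are exactly the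
`q`-element sets that are not blocks (the complement of an infinite matching). Then
(1) every finite `S` contains a clique of size at least `((q-1)/q)·|S|`, hence `H` has the
fractional Helly property, and (2) for every `s ≥ q`, `H` contains an
`M_s^{(q)}(q)`-configuration. -/
theorem stmt_2 {V : Type*} [Countable V] [Infinite V] (q : ℕ) (hq : 2 ≤ q)
    (B : ℕ → Finset V)
    (hdisj : ∀ m n, m ≠ n → Disjoint (B m) (B n))
    (hcard : ∀ n, (B n).card = q)
    (hcover : ∀ v : V, ∃ n, v ∈ B n)
    (H : Set (Finset V))
    (hH : H = {e : Finset V | e.card = q ∧ ∀ n, e ≠ B n}) :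
    ((∀ S : Finset V, ∃ K : Finset V, K ⊆ S ∧ IsClique q H K ∧
        (((q : ℝ) - 1) / (q : ℝ)) * (S.card : ℝ) ≤ (K.card : ℝ)) ∧
      FracHelly q H) ∧
    (∀ s : ℕ, q ≤ s → ∃ Vs : Fin s → Finset V, IsMConfig q s q H Vs) := by
  classical
  have huniq : ∀ m n v, v ∈ B m → v ∈ B n → m = n := by
    intro m n v h1 h2
    by_contra h
    exact Finset.disjoint_left.1 (hdisj m n h) h1 h2
  have hne : ∀ n, ∃ v, v ∈ B n := fun n => by
    have : (B n).Nonempty := by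
      rw [← Finset.card_pos, hcard]; omega
    exact this
  choose r hr using hne
  choose c hc using hcover
  have hqpos : (0 : ℝ) < q := by
    have : 0 < q := by omega
    exact_mod_cast this
  have hq1 : (0 : ℝ) < (q : ℝ) - 1 := by
    have : (2 : ℝ) ≤ q := by exact_mod_cast hq
    linarith
  have key : ∀ S : Finset V, ∃ K : Finset V, K ⊆ S ∧ IsClique q H K ∧
        (((q : ℝ) - 1) / (q : ℝ)) * (S.card : ℝ) ≤ (K.card : ℝ) := by
    intro S
    let P : V → Prop := fun v => v = r (c v) ∧ B (c v) ⊆ S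
    refine ⟨S.filter (fun v => ¬ P v), Finset.filter_subset _ _, ?_, ?_⟩
    · intro e he hecard
      rw [hH]
      refine ⟨hecard, ?_⟩
      rintro n rfl
      have h1 := (Finset.mem_filter.1 (he (hr n))).2
      have h2 : c (r n) = n := huniq _ _ (r n) (hc _) (hr n)
      apply h1
      refine ⟨by rw [h2], ?_⟩
      rw [h2]
      exact he.trans (Finset.filter_subset _ _)
    · have hsum := Finset.card_filter_add_card_filter_not (s := S) P
      have hb : ((S.filter P).biUnion (fun v => B (c v))).card = (S.filter P).card * q := by
        rw [Finset.card_biUnion]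
        · simp [hcard]
        · intro x hx y hy hxy
          apply hdisj
          intro h
          apply hxy
          rw [(Finset.mem_filter.1 hx).2.1, (Finset.mem_filter.1 hy).2.1, h]
      have hle : (S.filter P).card * q ≤ S.card := by
        rw [← hb]
        apply Finset.card_le_card
        intro x hx
        obtain ⟨v, hv, hxv⟩ := Finset.mem_biUnion.1 hx
        exact (Finset.mem_filter.1 hv).2.2 hxv
      have hsum' : ((S.filter P).card : ℝ) + ((S.filter (fun v => ¬ P v)).card : ℝ) = S.card := by
        exact_mod_cast hsum
      have hle' : ((S.filter P).card : ℝ) * q ≤ S.card := by exact_mod_cast hle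
      rw [div_mul_eq_mul_div, div_le_iff₀ hqpos]
      nlinarith
  refine ⟨⟨key, ?_⟩, ?_⟩
  · intro α _
    exact ⟨((q : ℝ) - 1) / q, div_pos hq1 hqpos, fun S _ => key S⟩
  · intro s _
    refine ⟨fun i => B i, ?_, fun i => hcard i, ?_, ?_⟩
    · intro i j hij
      exact hdisj _ _ (fun h => hij (Fin.ext h))
    · intro i e he hecard heH
      rw [hH] at heH
      exact heH.2 i (Finset.eq_of_subset_of_card_le (by exact_mod_cast he)
        (by rw [hcard, hecard]))
    · intro e hecard hcov htr
      rw [hH]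
      refine ⟨hecard, ?_⟩
      rintro n rfl
      obtain ⟨x, hx, y, hy, hxy⟩ := Finset.one_lt_card.1 (show 1 < (B n).card by omega)
      obtain ⟨i, hi⟩ := hcov x hx
      have hin : (i : ℕ) = n := huniq _ _ x hi hx
      exact hxy (htr i x hx y hy hi (by beta_reduce; rw [hin]; exact hy))
end

section
/- For every integer q ≥ 2 there exists a q-uniform hypergraph H (on some infinite vertex set) such that H contains no M_q^{(q)}(q+1)-configuration, yet H does not satisfy the fractional Helly property. -/
theorem zyk_prod_bound {ι : Type} (s : Finset ι) (x : ι → ℝ) (h0 : ∀ i, 0 ≤ x i)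
    (h1 : ∀ i, x i ≤ 1) : (∏ i ∈ s, (1 - x i)) * (1 + ∑ i ∈ s, x i) ≤ 1 := by
  classical
  induction s using Finset.induction_on with
  | empty => simp
  | insert a s ha ih =>
    rw [Finset.prod_insert ha, Finset.sum_insert ha]
    have hp : 0 ≤ ∏ i ∈ s, (1 - x i) := Finset.prod_nonneg fun i _ => by linarith [h1 i]
    have hs : 0 ≤ ∑ i ∈ s, x i := Finset.sum_nonneg fun i _ => h0 i
    have ha0 := h0 a
    have ha1 := h1 a
    have hle : (1 - x a) * (1 + (x a + ∑ i ∈ s, x i)) ≤ 1 + ∑ i ∈ s, x i := by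
      nlinarith [mul_nonneg ha0 hs, mul_nonneg ha0 ha0]
    calc (1 - x a) * (∏ i ∈ s, (1 - x i)) * (1 + (x a + ∑ i ∈ s, x i))
        = (∏ i ∈ s, (1 - x i)) * ((1 - x a) * (1 + (x a + ∑ i ∈ s, x i))) := by ring
      _ ≤ (∏ i ∈ s, (1 - x i)) * (1 + ∑ i ∈ s, x i) := mul_le_mul_of_nonneg_left hle hp
      _ ≤ 1 := ih

/-- key numeric inequality -/
theorem zyk_num (m k : ℕ) (hk : (m + 1) * m ≤ 2 * k) (x : Fin k → ℝ) (h0 : ∀ i, 0 ≤ x i)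
    (h1 : ∀ i, x i ≤ 1) (h2 : ∀ i, (m + 1 : ℝ) * x i ≤ 2) :
    (m : ℝ) * ∑ i, x i + 2 * k * ∏ i, (1 - x i) ≤ 2 * k := by
  have hb := zyk_prod_bound Finset.univ x h0 h1
  have hs : 0 ≤ ∑ i, x i := Finset.sum_nonneg fun i _ => h0 i
  have hs2 : (m + 1 : ℝ) * ∑ i, x i ≤ 2 * k := by
    rw [Finset.mul_sum]
    calc _ ≤ ∑ i : Fin k, (2 : ℝ) := Finset.sum_le_sum fun i _ => h2 i
      _ = 2 * k := by simp [mul_comm]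
  generalize (∑ i, x i) = s at *
  generalize (∏ i, (1 - x i)) = p at *
  have hk' : ((m : ℝ) + 1) * m ≤ 2 * k := by exact_mod_cast hk
  have hm : (0 : ℝ) ≤ m := Nat.cast_nonneg m
  have hk0 : (0 : ℝ) ≤ k := Nat.cast_nonneg k
  have key : (m : ℝ) * (1 + s) ≤ 2 * k := by
    have : ((m : ℝ) + 1) * (m * (1 + s)) ≤ (m + 1) * (2 * k) := by nlinarith
    exact le_of_mul_le_mul_left this (by linarith)
  have : (m * s + 2 * k * p) * (1 + s) ≤ 2 * k * (1 + s) := by nlinarith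
  exact le_of_mul_le_mul_right this (by linarith)

def ZGood (m : ℕ) (V : Type) (_ : Fintype V) (R : V → V → Prop) (w : V → ℕ) : Prop :=
  (∀ x y, R x y → R y x) ∧ (∀ x y z, R x y → R y z → R x z → False) ∧ 0 < ∑ v, w v ∧
  ∀ P : V → Prop, (∀ x y, P x → P y → ¬ R x y) →
    (m + 1) * (∑ v, open Classical in if P v then w v else 0) ≤ 2 * ∑ v, w v

def zykR {V : Type} (k : ℕ) (R : V → V → Prop) :
    (Fin k × V) ⊕ (Fin k → V) → (Fin k × V) ⊕ (Fin k → V) → Prop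
  | .inl a, .inl b => a.1 = b.1 ∧ R a.2 b.2
  | .inl a, .inr f => f a.1 = a.2
  | .inr f, .inl a => f a.1 = a.2
  | .inr _, .inr _ => False

def zykW {V : Type} (m k W : ℕ) (w : V → ℕ) : (Fin k × V) ⊕ (Fin k → V) → ℕ
  | .inl a => m * W ^ k * w a.2
  | .inr f => 2 * k * W * ∏ i, w (f i)

theorem zyk_sum_prod {V : Type} [Fintype V] (k : ℕ) (g : Fin k → V → ℕ) :
    ∑ f : Fin k → V, ∏ i, g i (f i) = ∏ i, ∑ v, g i v := by
  classical
  rw [Finset.prod_univ_sum]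
  simp

theorem zyk_step (m : ℕ) (V : Type) (iV : Fintype V) (R : V → V → Prop) (w : V → ℕ)
    (h : ZGood m V iV R w) :
    ∃ (V' : Type) (i : Fintype V') (R' : V' → V' → Prop) (w' : V' → ℕ),
      ZGood (m + 1) V' i R' w' := by
  classical
  obtain ⟨hsym, htri, hpos, hind⟩ := h
  set W := ∑ v, w v with hW
  set k := (m + 1) ^ 2 with hk
  have hkpos : 0 < k := by positivity
  have htot : ∑ v, zykW m k W w v = (m + 2) * k * W ^ (k + 1) := by
    rw [Fintype.sum_sum_type, Fintype.sum_prod_type]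
    simp only [zykW]
    simp only [← Finset.mul_sum]
    rw [zyk_sum_prod k (fun _ => w)]
    simp [← hW]
    ring
  refine ⟨_, inferInstance, zykR k R, zykW m k W w, ?_, ?_, ?_, ?_⟩
  · rintro (a | f) (b | g) hh
    · exact ⟨hh.1.symm, hsym _ _ hh.2⟩
    · exact hh
    · exact hh
    · exact hh
  · rintro (⟨i, a⟩ | f) (⟨j, b⟩ | g) (⟨l, c⟩ | h) h1 h2 h3 <;> simp only [zykR] at h1 h2 h3
    · exact htri _ _ _ h1.2 h2.2 h3.2
    · obtain ⟨rfl, h1⟩ := h1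
      rw [h2] at h3; subst h3; exact htri _ _ _ h1 h1 h1
    · obtain ⟨rfl, h3⟩ := h3
      rw [h1] at h2; subst h2; exact htri _ _ _ h3 h3 h3
    · obtain ⟨rfl, h2⟩ := h2
      rw [h1] at h3; subst h3; exact htri _ _ _ h2 h2 h2
  · rw [htot]; positivity
  · intro P hP
    rw [htot, Fintype.sum_sum_type, Fintype.sum_prod_type]
    set p : Fin k → ℕ := fun i => ∑ v, if P (.inl (i, v)) then w v else 0 with hp
    have hpi : ∀ i, (m + 1) * p i ≤ 2 * W := by
      intro i
      have := hind (fun v => P (.inl (i, v))) (fun x y hx hy hxy => hP _ _ hx hy ⟨rfl, hxy⟩)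
      convert this
    have hcomp : ∀ i, p i + (∑ v, if P (.inl (i, v)) then 0 else w v) = W := by
      intro i
      rw [hp, hW, ← Finset.sum_add_distrib]
      refine Finset.sum_congr rfl fun v _ => ?_
      split_ifs <;> simp
    have e1 : (∑ i, ∑ v, if P (.inl (i, v)) then zykW m k W w (.inl (i, v)) else 0)
        = m * W ^ k * ∑ i, p i := by
      rw [Finset.mul_sum]
      refine Finset.sum_congr rfl fun i _ => ?_
      rw [hp, Finset.mul_sum]
      refine Finset.sum_congr rfl fun v _ => ?_
      simp [zykW]
    have e2 : (∑ f, if P (.inr f) then zykW m k W w (.inr f) else 0)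
        ≤ 2 * k * W * ∏ i, (∑ v, if P (.inl (i, v)) then 0 else w v) := by
      rw [← zyk_sum_prod k (fun i v => if P (.inl (i, v)) then 0 else w v), Finset.mul_sum]
      refine Finset.sum_le_sum fun f _ => ?_
      split_ifs with hf
      · have : ∀ i, ¬ P (.inl (i, f i)) := fun i hi => hP _ _ hi hf rfl
        simp [zykW, this]
      · simp
    have main : m * W ^ k * ∑ i, p i +
        2 * k * W * ∏ i, (∑ v, if P (.inl (i, v)) then 0 else w v) ≤ 2 * (k * W ^ (k + 1)) := by
      have hWr : (0 : ℝ) < W := by exact_mod_cast hpos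
      have hn := zyk_num m k (by rw [hk]; nlinarith) (fun i => (p i : ℝ) / W)
        (fun i => by positivity)
        (fun i => by
          rw [div_le_one hWr]
          exact_mod_cast (by have := hcomp i; omega : p i ≤ W))
        (fun i => by
          rw [← mul_div_assoc, div_le_iff₀ hWr]
          exact_mod_cast hpi i)
      have hq : ∀ i, (1 - (p i : ℝ) / W) =
          ((∑ v, if P (.inl (i, v)) then 0 else w v : ℕ) : ℝ) / W := by
        intro i
        have : ((p i : ℝ) + ((∑ v, if P (.inl (i, v)) then 0 else w v : ℕ) : ℝ)) = W := by
          exact_mod_cast hcomp i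
        field_simp
        linarith
      simp only [hq] at hn
      rw [Finset.prod_div_distrib, ← Finset.sum_div] at hn
      simp only [Finset.prod_const, Finset.card_univ, Fintype.card_fin] at hn
      have h3 := mul_le_mul_of_nonneg_right hn (by positivity : (0 : ℝ) ≤ W ^ (k + 1))
      have h4 : ∀ a b : ℝ, ((m : ℝ) * (a / W) + 2 * k * (b / W ^ k)) * W ^ (k + 1)
          = m * W ^ k * a + 2 * k * W * b := by
        intro a b
        field_simp
        ring
      rw [h4] at h3
      have h5 : (2 * k * (W : ℝ) ^ (k + 1)) = 2 * (k * W ^ (k + 1)) := by ring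
      rw [h5] at h3
      exact_mod_cast h3
    have hfin := (Nat.add_le_add e1.le e2).trans main
    have := Nat.mul_le_mul_left (m + 1 + 1) hfin
    refine le_trans this (le_of_eq ?_)
    ring

theorem zyk_exists (m : ℕ) : ∃ (V : Type) (i : Fintype V) (R : V → V → Prop) (w : V → ℕ),
    ZGood m V i R w := by
  induction m with
  | zero =>
    refine ⟨Unit, inferInstance, fun _ _ => False, fun _ => 1, ?_, ?_, ?_, ?_⟩
    · simp
    · simp
    · simp
    · intro P _
      by_cases h : P () <;> simp [h]
  | succ m ih =>
    obtain ⟨V, i, R, w, h⟩ := ih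
    exact zyk_step m V i R w h

theorem zyk_blow (m : ℕ) : ∃ (V : Type) (_ : Fintype V) (R : V → V → Prop), Nonempty V ∧
    (∀ x y, R x y → R y x) ∧ (∀ x y z, R x y → R y z → R x z → False) ∧
    ∀ I : Finset V, (∀ x ∈ I, ∀ y ∈ I, ¬ R x y) → (m + 1) * I.card ≤ 2 * Fintype.card V := by
  classical
  obtain ⟨V, i, R, w, hsym, htri, hpos, hind⟩ := zyk_exists m
  have hc : Fintype.card (Σ v, Fin (w v)) = ∑ v, w v := by simp
  refine ⟨Σ v, Fin (w v), inferInstance, fun a b => R a.1 b.1, ?_, fun _ _ => hsym _ _,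
    fun _ _ _ => htri _ _ _, ?_⟩
  · rw [← Fintype.card_pos_iff, hc]; exact hpos
  · intro I hI
    rw [hc]
    have := hind (fun v => ∃ x ∈ I, x.1 = v) (by
      rintro _ _ ⟨x, hx, rfl⟩ ⟨y, hy, rfl⟩
      exact hI x hx y hy)
    refine le_trans (Nat.mul_le_mul_left _ ?_) this
    have hsub : I ⊆ (Finset.univ.filter fun v => ∃ x ∈ I, x.1 = v).sigma
        (fun v => (Finset.univ : Finset (Fin (w v)))) := by
      intro x hx
      simp only [Finset.mem_sigma, Finset.mem_filter, Finset.mem_univ, true_and, and_true]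
      exact ⟨x, hx, rfl⟩
    refine (Finset.card_le_card hsub).trans (le_of_eq ?_)
    rw [Finset.card_sigma, Finset.sum_filter]
    refine Finset.sum_congr rfl fun v _ => ?_
    simp

/-- One infinite triangle-free graph. -/
theorem zyk_inf : ∃ (V : Type) (R : V → V → Prop), Infinite V ∧
    (∀ x y, R x y → R y x) ∧ (∀ x y z, R x y → R y z → R x z → False) ∧
    ∀ m : ℕ, ∃ S : Finset V, S.Nonempty ∧ ∀ I ⊆ S, (∀ x ∈ I, ∀ y ∈ I, ¬ R x y) →
      (m + 1) * I.card ≤ 2 * S.card := by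
  classical
  choose V i R hne hsym htri hind using zyk_blow
  refine ⟨Σ m, V m, fun a b => ∃ m x y, a = ⟨m, x⟩ ∧ b = ⟨m, y⟩ ∧ R m x y, ?_, ?_, ?_, ?_⟩
  · exact Infinite.of_injective (fun m => (⟨m, (hne m).some⟩ : Σ m, V m))
      (fun a b h => (Sigma.mk.inj h).1)
  · rintro _ _ ⟨m, x, y, rfl, rfl, h⟩
    exact ⟨m, y, x, rfl, rfl, hsym _ _ _ h⟩
  · rintro _ _ _ ⟨m, x, y, rfl, rfl, h⟩ ⟨m', x', z, h1, rfl, h'⟩ ⟨m'', x'', z', h2, h3, h''⟩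
    cases h1; cases h2; cases h3
    exact htri _ _ _ _ h h' h''
  · intro m
    refine ⟨Finset.univ.map (Function.Embedding.sigmaMk m), ?_, ?_⟩
    · haveI := hne m
      simp
    · intro I hI hR
      have hpre : I = (Finset.univ.filter fun v => (⟨m, v⟩ : Σ m, V m) ∈ I).map
          (Function.Embedding.sigmaMk m) := by
        ext a
        simp only [Finset.mem_map, Finset.mem_filter, Finset.mem_univ, true_and,
          Function.Embedding.sigmaMk_apply]
        constructor
        · intro ha
          obtain ⟨v, _, rfl⟩ := Finset.mem_map.1 (hI ha)
          exact ⟨v, ha, rfl⟩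
        · rintro ⟨v, hv, rfl⟩; exact hv
      rw [hpre, Finset.card_map, Finset.card_map, Finset.card_univ]
      apply hind
      intro x hx y hy hxy
      simp only [Finset.mem_filter, Finset.mem_univ, true_and] at hx hy
      exact hR _ hx _ hy ⟨m, x, y, rfl, rfl, hxy⟩

/-- The hypergraph. -/
def zykH {V : Type} [LinearOrder V] (R : V → V → Prop) (q : ℕ) : Set (Finset V) :=
  {e | e.card = q ∧ ¬ ∃ x ∈ e, ∃ y ∈ e, x < y ∧ R x y ∧ ∀ z ∈ e, z = x ∨ y ≤ z}

theorem zyk_noindep {V : Type} [LinearOrder V] (R : V → V → Prop)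
    (htri : ∀ x y z, R x y → R y z → R x z → False) (q : ℕ) (hq : 2 ≤ q) (T : Finset V)
    (hT : T.card = q + 1) : ∃ e ∈ zykH R q, e ⊆ T := by
  by_contra hcon
  push Not at hcon
  have hE : ∀ t ∈ T, ∃ x ∈ T.erase t, ∃ y ∈ T.erase t, x < y ∧ R x y ∧
      ∀ z ∈ T.erase t, z = x ∨ y ≤ z := by
    intro t ht
    by_contra hne
    exact hcon (T.erase t) ⟨by rw [Finset.card_erase_of_mem ht]; omega, hne⟩
      (Finset.erase_subset _ _)
  have n1 : T.Nonempty := by rw [← Finset.card_pos]; omega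
  set a := T.min' n1 with ha
  have haT : a ∈ T := T.min'_mem _
  have c2 : (T.erase a).card = q := by rw [Finset.card_erase_of_mem haT]; omega
  have n2 : (T.erase a).Nonempty := by rw [← Finset.card_pos]; omega
  set b := (T.erase a).min' n2 with hb
  have hbT : b ∈ T.erase a := (T.erase a).min'_mem _
  have c3 : ((T.erase a).erase b).card = q - 1 := by rw [Finset.card_erase_of_mem hbT]; omega
  have n3 : ((T.erase a).erase b).Nonempty := by rw [← Finset.card_pos]; omega
  set c := ((T.erase a).erase b).min' n3 with hc
  have hcT : c ∈ (T.erase a).erase b := Finset.min'_mem _ _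
  have la : ∀ z ∈ T, a ≤ z := fun z hz => Finset.min'_le _ _ hz
  have lb : ∀ z ∈ T, z ≠ a → b ≤ z := fun z hz h =>
    Finset.min'_le _ _ (Finset.mem_erase.2 ⟨h, hz⟩)
  have lc : ∀ z ∈ T, z ≠ a → z ≠ b → c ≤ z := fun z hz h h' =>
    Finset.min'_le _ _ (Finset.mem_erase.2 ⟨h', Finset.mem_erase.2 ⟨h, hz⟩⟩)
  clear_value a b c
  simp only [Finset.mem_erase] at hbT hcT hE
  obtain ⟨hba, hbT⟩ := hbT
  obtain ⟨hcb, hca, hcT⟩ := hcT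
  have hab : a < b := lt_of_le_of_ne (la b hbT) hba.symm
  have hbc : b < c := lt_of_le_of_ne (lb c hcT hca) hcb.symm
  have gen : ∀ t u v, t ∈ T → u ∈ T → v ∈ T → u ≠ t → v ≠ t → u < v →
      (∀ z ∈ T, z ≠ t → u ≤ z) → (∀ z ∈ T, z ≠ t → z ≠ u → v ≤ z) → R u v := by
    intro t u v ht hu hv hut hvt huv h1 h2
    obtain ⟨x, ⟨hxt, hx⟩, y, ⟨hyt, hy⟩, hxy, hR, hz⟩ := hE t ht
    have hux : u = x := by
      rcases hz u ⟨hut, hu⟩ with h | h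
      · exact h
      · exact absurd (h1 x hx hxt) (not_le.2 (lt_of_lt_of_le hxy h))
    subst hux
    have hvy : v = y := by
      apply le_antisymm
      · exact h2 y hy hyt hxy.ne'
      · rcases hz v ⟨hvt, hv⟩ with h | h
        · exact absurd h huv.ne'
        · exact h
    subst hvy
    exact hR
  refine htri a b c ?_ ?_ ?_
  · exact gen c a b hcT haT hbT hca.symm hcb.symm hab (fun z hz _ => la z hz)
      (fun z hz _ h => lb z hz h)
  · exact gen a b c haT hbT hcT hba hca hbc (fun z hz h => lb z hz h)
      (fun z hz h h' => lc z hz h h')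
  · exact gen b a c hbT haT hcT hba.symm hcb (hab.trans hbc) (fun z hz _ => la z hz)
      (fun z hz h h' => lc z hz h' h)

theorem zyk_top {V : Type} [LinearOrder V] (r : ℕ) (K : Finset V) (h : r ≤ K.card) :
    ∃ L ⊆ K, L.card = r ∧ ∀ x ∈ K, x ∉ L → ∀ y ∈ L, x < y := by
  induction r with
  | zero => exact ⟨∅, by simp, by simp, by simp⟩
  | succ r ih =>
    obtain ⟨L, hLK, hc, hL⟩ := ih (by omega)
    have hn : (K \ L).Nonempty := by
      rw [← Finset.card_pos, Finset.card_sdiff_of_subset hLK]; omega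
    have hmem := (K \ L).max'_mem hn
    have hmax : ∀ z ∈ K \ L, z ≤ (K \ L).max' hn := fun z hz => (K \ L).le_max' z hz
    generalize (K \ L).max' hn = t at hmem hmax
    rw [Finset.mem_sdiff] at hmem
    refine ⟨insert t L, Finset.insert_subset hmem.1 hLK, ?_, ?_⟩
    · rw [Finset.card_insert_of_notMem hmem.2, hc]
    · intro x hx hxL y hy
      rw [Finset.mem_insert, not_or] at hxL
      rcases Finset.mem_insert.1 hy with rfl | hy
      · exact lt_of_le_of_ne (hmax x (Finset.mem_sdiff.2 ⟨hx, hxL.2⟩)) hxL.1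
      · exact hL x hx hxL.2 y hy

theorem zyk_clique {V : Type} [LinearOrder V] (R : V → V → Prop)
    (hsym : ∀ x y, R x y → R y x)
    (htri : ∀ x y z, R x y → R y z → R x z → False) (q : ℕ) (hq : 2 ≤ q) (K : Finset V)
    (hK : IsClique q (zykH R q) K) :
    ∃ I ⊆ K, (∀ x ∈ I, ∀ y ∈ I, ¬ R x y) ∧ K.card ≤ I.card + q := by
  by_cases hc : q - 2 ≤ K.card
  · obtain ⟨L, hLK, hLc, hL⟩ := zyk_top (q - 2) K hc
    have key : ∀ x ∈ K \ L, ∀ y ∈ K \ L, x < y → ¬ R x y := by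
      intro x hx y hy hxy hR
      rw [Finset.mem_sdiff] at hx hy
      have he : insert x (insert y L) ∈ zykH R q := by
        apply hK
        · exact Finset.insert_subset hx.1 (Finset.insert_subset hy.1 hLK)
        · rw [Finset.card_insert_of_notMem, Finset.card_insert_of_notMem hy.2, hLc]
          · omega
          · rw [Finset.mem_insert, not_or]; exact ⟨hxy.ne, hx.2⟩
      apply he.2
      refine ⟨x, by simp, y, by simp, hxy, hR, ?_⟩
      intro z hz
      rcases Finset.mem_insert.1 hz with h | hz
      · exact Or.inl h
      · rcases Finset.mem_insert.1 hz with h | hz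
        · exact Or.inr h.ge
        · exact Or.inr (hL y hy.1 hy.2 z hz).le
    refine ⟨K \ L, Finset.sdiff_subset, ?_, ?_⟩
    · intro x hx y hy hR
      rcases lt_trichotomy x y with h | h | h
      · exact key x hx y hy h hR
      · subst h; exact htri _ _ _ hR hR hR
      · exact key y hy x hx h (hsym _ _ hR)
    · rw [Finset.card_sdiff_of_subset hLK]; omega
  · exact ⟨∅, by simp, by simp, by omega⟩

theorem zyk_density {V : Type} (H : Set (Finset V)) (q : ℕ) (hu : IsUniform q H)
    (hT : ∀ T : Finset V, T.card = q + 1 → ∃ e ∈ H, e ⊆ T) (S : Finset V) (hS : q < S.card) :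
    (1 / (q + 1 : ℝ)) * (S.card.choose q : ℝ) ≤ ({e : Finset V | e ∈ H ∧ e ⊆ S}.ncard : ℝ) := by
  classical
  set E := S.powerset.filter (· ∈ H) with hE
  have hEs : {e : Finset V | e ∈ H ∧ e ⊆ S} = ↑E := by
    ext e; simp [hE, and_comm]
  rw [hEs, Set.ncard_coe_finset]
  have hsub : S.powersetCard (q + 1) ⊆
      (E.sigma fun e => S \ e).image (fun p => insert p.2 p.1) := by
    intro T hTm
    rw [Finset.mem_powersetCard] at hTm
    obtain ⟨e, he, heT⟩ := hT T hTm.2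
    have hc : (T \ e).card = 1 := by
      rw [Finset.card_sdiff_of_subset heT, hTm.2, hu e he]; omega
    obtain ⟨v, hv⟩ := Finset.card_eq_one.1 hc
    have hvm : v ∈ T \ e := by rw [hv]; simp
    rw [Finset.mem_sdiff] at hvm
    rw [Finset.mem_image]
    refine ⟨⟨e, v⟩, ?_, ?_⟩
    · simp [hE, he, heT.trans hTm.1, hTm.1 hvm.1, hvm.2]
    · show insert v e = T
      rw [← Finset.sdiff_union_of_subset heT, hv]
      rfl
  have h1 := (Finset.card_le_card hsub).trans Finset.card_image_le
  rw [Finset.card_powersetCard, Finset.card_sigma] at h1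
  have h2 : ∑ e ∈ E, (S \ e).card = E.card * (S.card - q) := by
    rw [Finset.sum_const_nat]
    intro e he
    simp only [hE, Finset.mem_filter, Finset.mem_powerset] at he
    rw [Finset.card_sdiff_of_subset he.1, hu e he.2]
  rw [h2] at h1
  have h3 := Nat.choose_succ_right_eq S.card q
  have h4 : S.card.choose q * (S.card - q) ≤ (E.card * (q + 1)) * (S.card - q) := by
    rw [← h3]
    nlinarith
  have h5 : S.card.choose q ≤ E.card * (q + 1) := Nat.le_of_mul_le_mul_right h4 (by omega)
  have h6 : (S.card.choose q : ℝ) ≤ E.card * (q + 1) := by exact_mod_cast h5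
  rw [one_div, inv_mul_le_iff₀ (by positivity)]
  linarith

/-- For every `q ≥ 2` there is a `q`-uniform hypergraph on an infinite
vertex set which contains no `M_q^{(q)}(q+1)`-configuration but does not satisfy the
fractional Helly property. -/
theorem stmt_3 (q : ℕ) (hq : 2 ≤ q) :
    ∃ (V : Type) (H : Set (Finset V)), Infinite V ∧ IsUniform q H ∧
      (¬ ∃ Vs : Fin q → Finset V, IsMConfig q q (q + 1) H Vs) ∧
      ¬ FracHelly q H := by
  classical
  obtain ⟨V, R, hinf, hsym, htri, hS⟩ := zyk_inf
  letI : LinearOrder V := IsWellOrder.linearOrder WellOrderingRel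
  have hu : IsUniform q (zykH R q) := fun e he => he.1
  refine ⟨V, zykH R q, hinf, hu, ?_, ?_⟩
  · rintro ⟨Vs, -, hc, hi, -⟩
    let i : Fin q := ⟨0, by omega⟩
    obtain ⟨e, he, heT⟩ := zyk_noindep R htri q hq (Vs i) (hc i)
    exact hi i e (by exact_mod_cast heT) he.1 he
  · intro hF
    obtain ⟨β, hβ, hF⟩ := hF (1 / (q + 1 : ℝ)) (by positivity)
    obtain ⟨m, hm⟩ := exists_nat_gt (4 * q / β + 2 * q + 8 / β)
    obtain ⟨S, ⟨s, hs⟩, hS⟩ := hS m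
    have hqr : (0 : ℝ) ≤ q := Nat.cast_nonneg q
    have hp1 : 0 ≤ 4 * q / β := by positivity
    have hp2 : 0 ≤ 8 / β := by positivity
    have h1 := hS {s} (by simpa using hs) (by
      intro x hx y hy h
      rw [Finset.mem_singleton] at hx hy
      subst hx; subst hy
      exact htri _ _ _ h h h)
    rw [Finset.card_singleton] at h1
    have h1r : (m : ℝ) + 1 ≤ 2 * S.card := by exact_mod_cast (by omega : m + 1 ≤ 2 * S.card)
    have hqS : q < S.card := by
      have : (q : ℝ) < S.card := by linarith
      exact_mod_cast this
    obtain ⟨K, hKS, hK, hKc⟩ := hF S (zyk_density _ q hu (zyk_noindep R htri q hq) S hqS)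
    obtain ⟨I, hIK, hI, hIc⟩ := zyk_clique R hsym htri q hq K hK
    have h2 := hS I (hIK.trans hKS) hI
    have h2r : ((m : ℝ) + 1) * I.card ≤ 2 * S.card := by exact_mod_cast h2
    have hIcr : (K.card : ℝ) ≤ I.card + q := by exact_mod_cast hIc
    have hSp : (0 : ℝ) < S.card := by linarith
    have hA : 8 < m * β := by rw [← div_lt_iff₀ hβ]; linarith
    have hB : 4 * q < m * β := by rw [← div_lt_iff₀ hβ]; linarith
    -- β|S| > 2q
    have hC : 2 * q < β * S.card := by nlinarith
    have hI0 : (0 : ℝ) ≤ I.card := Nat.cast_nonneg _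
    -- |I| ≤ β|S|/4
    have hD : (I.card : ℝ) * 4 ≤ β * S.card := by
      have hm0 : (0 : ℝ) < m := by linarith
      have e1 : (m : ℝ) * I.card ≤ 2 * S.card := by nlinarith
      have e2 : (m : ℝ) * (I.card * 4) ≤ m * (β * S.card) := by nlinarith
      exact le_of_mul_le_mul_left e2 hm0
    have hE : 0 < β * S.card := by positivity
    linarith
end

section
/- Let q ≥ 2 be an integer. For every sequence (n'_i)_{i∈ℕ} of positive integers there exists a sequence (n_i)_{i∈ℕ} of positive integers with the following property: for every q-uniform hypergraph H on a vertex set V and every sequence (V_i)_{i∈ℕ} of pairwise disjoint finite subsets of V with |V_i| ≥ n_i for all i, there exists a subsequence of subsets (V'_i)_{i∈ℕ} of (V_i)_{i∈ℕ} such that |V'_i| ≥ n'_i for all i, and H together with (V'_i)_{i∈ℕ} is (q-1)-homogeneous. -/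
/-- `v` is an increasing `p`-tuple of the sequence of sets `Vs`: there are indices
`i_1 < i_2 < … < i_p` with `v j ∈ Vs (i_j)` for each `j`. -/
def IsIncrTuple {V : Type*} {p : ℕ} (Vs : ℕ → Finset V) (v : Fin p → V) : Prop :=
  ∃ idx : Fin p → ℕ, StrictMono idx ∧ ∀ j, v j ∈ Vs (idx j)

/-- The vertex set `{w 0, …, w (q-1)}` of a `q`-tuple, as a finset. -/
noncomputable def tupleEdge {V : Type*} {q : ℕ} (w : Fin q → V) : Finset V :=
  @Finset.image _ _ (Classical.decEq V) w Finset.univ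

/-- `H` is homogeneous with respect to the increasing `p`-tuple `v` of `Vs` (`p ≤ q`):
either every increasing `q`-tuple of `Vs` extending `v` spans an edge,
or none of them does. -/
def HomogWrt {V : Type*} (q : ℕ) (H : Set (Finset V)) (Vs : ℕ → Finset V)
    {p : ℕ} (hpq : p ≤ q) (v : Fin p → V) : Prop :=
  (∀ w : Fin q → V, IsIncrTuple Vs w → (∀ j : Fin p, w (Fin.castLE hpq j) = v j) →
      tupleEdge w ∈ H) ∨
  (∀ w : Fin q → V, IsIncrTuple Vs w → (∀ j : Fin p, w (Fin.castLE hpq j) = v j) →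
      tupleEdge w ∉ H)

/-- `H` together with `Vs` is `p`-homogeneous: it is homogeneous with respect to
every increasing `p`-tuple of `Vs`. -/
def PHomog {V : Type*} (q : ℕ) (H : Set (Finset V)) (Vs : ℕ → Finset V)
    (p : ℕ) (hpq : p ≤ q) : Prop :=
  ∀ v : Fin p → V, IsIncrTuple Vs v → HomogWrt q H Vs hpq v

/-- `Vs'` is a subsequence of subsets of `Vs`: there are indices `i_1 < i_2 < …`
with `Vs' j ⊆ Vs (i_j)` for every `j`. -/
def SubseqOfSubsets {V : Type*} (Vs Vs' : ℕ → Finset V) : Prop :=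
  ∃ idx : ℕ → ℕ, StrictMono idx ∧ ∀ j, Vs' j ⊆ Vs (idx j)

open Finset in
theorem aux_step {V : Type} (H : Set (Finset V)) (W : ℕ → Finset V) (U : Finset V) :
    ∃ (f : ℕ → ℕ) (W' : ℕ → Finset V), StrictMono f ∧ (∀ j, W' j ⊆ W (f j)) ∧
      (∀ j, (W (f j)).card ≤ (W' j).card * 2 ^ 2 ^ U.card) ∧
      ∀ S ⊆ U, ∀ i j, ∀ x ∈ W' i, ∀ y ∈ W' j,
        (@insert _ _ (@Finset.instInsert _ (Classical.decEq V)) x S ∈ H ↔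
          @insert _ _ (@Finset.instInsert _ (Classical.decEq V)) y S ∈ H) := by
  classical
  let c : V → Finset (Finset V) := fun x => U.powerset.filter
    (fun S => @insert _ _ (@Finset.instInsert _ (Classical.decEq V)) x S ∈ H)
  let K : Finset (Finset (Finset V)) := U.powerset.powerset
  have hK : K.card = 2 ^ 2 ^ U.card := by simp [K]
  have hc : ∀ x, c x ∈ K := fun x => by
    simp only [K, c, Finset.mem_powerset]; exact Finset.filter_subset _ _
  have h1 : ∀ j, ∃ a : K, (W j).card ≤ ((W j).filter (fun x => c x = a)).card * 2 ^ 2 ^ U.card := by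
    intro j
    obtain ⟨a, ha, hmax⟩ := Finset.exists_max_image K
      (fun a => ((W j).filter (fun x => c x = a)).card) ⟨∅, by simp [K]⟩
    refine ⟨⟨a, ha⟩, ?_⟩
    rw [← hK]
    exact Finset.card_le_mul_card_image_of_maps_to (fun x _ => hc x) _ hmax
  choose g hg using h1
  obtain ⟨a, ha⟩ := Finite.exists_infinite_fiber g
  have hinf : (g ⁻¹' {a}).Infinite := Set.infinite_coe_iff.mp ha
  refine ⟨Nat.nth (· ∈ g ⁻¹' {a}),
    fun j => (W (Nat.nth (· ∈ g ⁻¹' {a}) j)).filter (fun x => c x = a),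
    Nat.nth_strictMono hinf, fun j => Finset.filter_subset _ _, ?_, ?_⟩
  · intro j
    have := hg (Nat.nth (· ∈ g ⁻¹' {a}) j)
    have h2 : g (Nat.nth (· ∈ g ⁻¹' {a}) j) = a := Nat.nth_mem_of_infinite hinf j
    rwa [h2] at this
  · intro S hS i j x hx y hy
    have hx' := (Finset.mem_filter.mp hx).2
    have hy' := (Finset.mem_filter.mp hy).2
    have h3 : S ∈ c x ↔ S ∈ c y := by rw [hx', hy']
    simpa [c, hS] using h3

theorem stmt_4 (q : ℕ) (hq : 2 ≤ q) (n' : ℕ → ℕ) (hn' : ∀ i, 0 < n' i) :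
    ∃ n : ℕ → ℕ, (∀ i, 0 < n i) ∧
      ∀ (V : Type) (H : Set (Finset V)), IsUniform q H →
        ∀ Vs : ℕ → Finset V, (∀ i j, i ≠ j → Disjoint (Vs i) (Vs j)) →
          (∀ i, n i ≤ (Vs i).card) →
          ∃ Vs' : ℕ → Finset V, SubseqOfSubsets Vs Vs' ∧
            (∀ i, n' i ≤ (Vs' i).card) ∧
            PHomog q H Vs' (q - 1) (by omega) := by
  let N : ℕ → ℕ := fun k => ∑ i ∈ Finset.range k, n' i
  let C : ℕ → ℕ := fun k => 2 ^ 2 ^ N (k + 1)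
  let D : ℕ → ℕ := fun k => ∏ i ∈ Finset.range k, C i
  have hNs : ∀ k, N (k + 1) = N k + n' k := fun k => Finset.sum_range_succ _ _
  have hDs : ∀ k, D (k + 1) = D k * C k := fun k => Finset.prod_range_succ _ _
  have hCpos : ∀ k, 0 < C k := fun k => by positivity
  have hDpos : ∀ k, 0 < D k := fun k => Finset.prod_pos (fun i _ => hCpos i)
  have hNpos : ∀ k, 0 < N (k + 1) := fun k => by have := hNs k; have := hn' k; omega
  have hPmono : Monotone (fun k => N (k + 1) * D k) := by
    apply monotone_nat_of_le_succ
    intro k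
    apply Nat.mul_le_mul
    · rw [hNs (k + 1)]; omega
    · rw [hDs]; exact Nat.le_mul_of_pos_right _ (hCpos k)
  refine ⟨fun k => N (k + 1) * D k, fun k => Nat.mul_pos (hNpos k) (hDpos k), ?_⟩
  intro V H _ Vs hdisj hcard
  classical
  let Inv : ℕ → (ℕ → Finset V) × Finset V × (ℕ → ℕ) → Prop := fun k s =>
    s.2.1.card ≤ N k ∧ (∀ j, N (k + j + 1) * D (k + j) ≤ (s.1 j).card * D k) ∧
    StrictMono s.2.2 ∧ ∀ j, s.1 j ⊆ Vs (s.2.2 j)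
  have step : ∀ k s, ∃ (A : Finset V) (s' : (ℕ → Finset V) × Finset V × (ℕ → ℕ)), Inv k s →
      Inv (k + 1) s' ∧ A ⊆ s.1 0 ∧ A.card = n' k ∧ s'.2.1 = s.2.1 ∪ A ∧ s.2.2 0 < s'.2.2 0 ∧
      (∀ j, ∃ i, s'.1 j ⊆ s.1 i) ∧
      ∀ S ⊆ s'.2.1, ∀ i j, ∀ x ∈ s'.1 i, ∀ y ∈ s'.1 j,
        (@insert _ _ (@Finset.instInsert _ (Classical.decEq V)) x S ∈ H ↔
          @insert _ _ (@Finset.instInsert _ (Classical.decEq V)) y S ∈ H) := by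
    rintro k ⟨W, U, F⟩
    by_cases hI : Inv k (W, U, F)
    swap
    · exact ⟨∅, (W, U, F), fun h => absurd h hI⟩
    obtain ⟨hU, hW, hF, hWF⟩ := hI
    dsimp only at hU hW hF hWF
    have h0 : n' k ≤ (W 0).card := by
      have := Nat.le_of_mul_le_mul_right (hW 0) (hDpos k)
      have := hNs k
      simp only [Nat.add_zero] at *
      omega
    obtain ⟨A, hA, hAc⟩ := Finset.exists_subset_card_eq h0
    obtain ⟨f, W', hf, hW', hc', hS⟩ := aux_step H (fun j => W (j + 1)) (U ∪ A)
    have hUA : (U ∪ A).card ≤ N (k + 1) := by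
      have := Finset.card_union_le U A
      have := hNs k
      omega
    refine ⟨A, (W', U ∪ A, fun j => F (f j + 1)), fun _ => ⟨⟨hUA, ?_, ?_, ?_⟩, hA, hAc, rfl, ?_, ?_, hS⟩⟩
    · intro j
      dsimp only
      have e1 := hPmono (show k + 1 + j ≤ k + (f j + 1) by have := hf.le_apply (x := j); omega)
      have e2 := hW (f j + 1)
      have e3 := hc' j
      have e4 : 2 ^ 2 ^ (U ∪ A).card ≤ C k :=
        Nat.pow_le_pow_right (by norm_num) (Nat.pow_le_pow_right (by norm_num) hUA)
      dsimp only at e1 e3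
      calc _ ≤ _ := e1
        _ ≤ _ := e2
        _ ≤ ((W' j).card * C k) * D k :=
          Nat.mul_le_mul_right _ (e3.trans (Nat.mul_le_mul_left _ e4))
        _ = _ := by rw [hDs]; ring
    · intro a b hab
      exact hF (Nat.add_lt_add_right (hf hab) 1)
    · intro j
      exact (hW' j).trans (hWF _)
    · exact hF (Nat.succ_pos _)
    · exact fun j => ⟨_, hW' j⟩
  choose A g hg using step
  let s : ℕ → (ℕ → Finset V) × Finset V × (ℕ → ℕ) :=
    fun k => Nat.rec (Vs, ∅, id) (fun k t => g k t) k
  have hs : ∀ k, s (k + 1) = g k (s k) := fun k => rfl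
  have hInv : ∀ k, Inv k (s k) := by
    intro k
    induction k with
    | zero =>
      refine ⟨by simp [s], ?_, strictMono_id, fun j => subset_rfl⟩
      intro j
      have := hcard j
      simpa [s, D] using this
    | succ k ih => rw [hs]; exact (hg k (s k) ih).1
  have hst := fun k => (hg k (s k) (hInv k)).2
  simp only [← hs] at hst
  have hidx : StrictMono (fun k => (s k).2.2 0) :=
    strictMono_nat_of_lt_succ (fun k => (hst k).2.2.2.1)
  have hsub : ∀ j, A j (s j) ⊆ Vs ((s j).2.2 0) :=
    fun j => (hst j).1.trans ((hInv j).2.2.2 0)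
  have hUm : Monotone (fun k => (s k).2.1) := by
    apply monotone_nat_of_le_succ
    intro k
    rw [(hst k).2.2.1]
    exact Finset.subset_union_left
  have hB : Antitone (fun k => {x | ∃ j, x ∈ (s k).1 j}) := by
    apply antitone_nat_of_succ_le
    rintro k x ⟨j, hj⟩
    obtain ⟨i, hi⟩ := (hst k).2.2.2.2.1 j
    exact ⟨i, hi hj⟩
  have hdisj' : ∀ i j x, x ∈ A i (s i) → x ∈ A j (s j) → i = j := by
    intro i j x hi hj
    by_contra hne
    exact Finset.disjoint_left.mp (hdisj _ _ (hidx.injective.ne hne)) (hsub i hi) (hsub j hj)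
  refine ⟨fun k => A k (s k), ⟨_, hidx, hsub⟩, fun i => ((hst i).2.1).ge, ?_⟩
  obtain ⟨r, rfl⟩ : ∃ r, q = r + 2 := ⟨q - 2, by omega⟩
  change PHomog (r + 2) H _ (r + 1) _
  rintro v ⟨idx, hidm, hv⟩
  set k := idx (Fin.last r) with hk
  have hvU : tupleEdge v ⊆ (s (k + 1)).2.1 := by
    intro x hx
    obtain ⟨j, -, rfl⟩ := by simpa [tupleEdge] using hx
    have h1 : idx j + 1 ≤ k + 1 := Nat.succ_le_succ (hidm.monotone (Fin.le_last j))
    apply hUm h1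
    dsimp only
    rw [(hst (idx j)).2.2.1]
    exact Finset.mem_union_right _ (hv j)
  have key : ∀ w : Fin (r + 2) → V, IsIncrTuple (fun k => A k (s k)) w →
      (∀ j : Fin (r + 1), w (Fin.castLE (by omega) j) = v j) →
      (∃ i, w (Fin.last _) ∈ (s (k + 1)).1 i) ∧
      tupleEdge w = @insert _ _ (@Finset.instInsert _ (Classical.decEq V)) (w (Fin.last _))
        (tupleEdge v) := by
    rintro w ⟨idw, hwm, hw⟩ hext
    constructor
    · have h1 : idw (Fin.castSucc (Fin.last r)) = k := by
        apply hdisj' _ _ _ (hw _)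
        have := hv (Fin.last r)
        rw [← hext] at this
        exact this
      have h2 : k + 1 ≤ idw (Fin.last _) := by
        rw [← h1]; exact hwm (Fin.castSucc_lt_last _)
      exact hB h2 ⟨0, (hst _).1 (hw (Fin.last _))⟩
    · ext x
      have hv' : v = fun j => w (Fin.castSucc j) := funext fun j => (hext j).symm
      simp only [tupleEdge, Finset.mem_image, Finset.mem_insert, Finset.mem_univ, true_and, hv']
      rw [Fin.exists_fin_succ']
      tauto
  by_cases hex : ∃ w : Fin (r + 2) → V, IsIncrTuple (fun k => A k (s k)) w ∧
      (∀ j : Fin (r + 1), w (Fin.castLE (by omega) j) = v j) ∧ tupleEdge w ∈ H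
  · left
    obtain ⟨w0, h1, h2, h3⟩ := hex
    intro w hw hext
    obtain ⟨⟨i0, hi0⟩, e0⟩ := key w0 h1 h2
    obtain ⟨⟨i, hi⟩, e⟩ := key w hw hext
    rw [e]
    rw [e0] at h3
    exact ((hst k).2.2.2.2.2 _ hvU _ _ _ hi0 _ hi).mp h3
  · right
    intro w hw hext hmem
    exact hex ⟨w, hw, hext, hmem⟩
end

section
/- Let q ≥ 2 and 1 ≤ p < q be integers. For every sequence (n'_i)_{i∈ℕ} of positive integers there exists a sequence (n_i)_{i∈ℕ} of positive integers with the following property: for every q-uniform hypergraph H on a vertex set V and every sequence (V_i)_{i∈ℕ} of pairwise disjoint finite subsets of V with |V_i| ≥ n_i for all i, there exists a subsequence of subsets (V'_i)_{i∈ℕ} of (V_i)_{i∈ℕ} such that |V'_i| ≥ n'_i for all i, and H together with (V'_i)_{i∈ℕ} is p-homogeneous. -/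
namespace HomogAux

/-- Number of colours at step `k`. -/
def ee (p : ℕ) (m : ℕ → ℕ) (k : ℕ) : ℕ := 2 ^ ((∑ i ∈ Finset.range (k + 1), m i) ^ p)

/-- Lower bounds at step `k`. -/
def gg (p : ℕ) (m : ℕ → ℕ) (k i : ℕ) : ℕ := m i * ∏ j ∈ Finset.Ico k i, ee p m j

lemma gg_self (p : ℕ) (m : ℕ → ℕ) (k : ℕ) : gg p m k k = m k := by simp [gg]

lemma gg_succ (p : ℕ) (m : ℕ → ℕ) (k i : ℕ) (h : k < i) :
    gg p m k i = ee p m k * gg p m (k + 1) i := by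
  unfold gg
  rw [Finset.prod_eq_prod_Ico_succ_bot h]
  ring

lemma gg_mono (p : ℕ) (m : ℕ → ℕ) (hm : Monotone m) (k : ℕ) : Monotone (gg p m k) := by
  intro i j hij
  unfold gg
  refine Nat.mul_le_mul (hm hij) ?_
  refine Finset.prod_le_prod_of_subset_of_one_le' (Finset.Ico_subset_Ico_right hij) ?_
  intro a _ _
  exact Nat.one_le_two_pow

/-- The invariant. -/
structure Inv {V : Type} (p : ℕ) (m : ℕ → ℕ) (c : (Fin p → V) → V → Prop) (Vs : ℕ → Finset V)
    (k : ℕ) (W : ℕ → Finset V) (φ : ℕ → ℕ) : Prop where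
  mono : StrictMono φ
  sub : ∀ i, W i ⊆ Vs (φ i)
  low : ∀ i, i < k → (W i).card = m i
  high : ∀ i, k ≤ i → gg p m k i ≤ (W i).card
  hom : ∀ l, l ≤ k → ∀ v : Fin p → V, (∀ j, ∃ i, i < l ∧ v j ∈ W i) →
    ∀ a b, l ≤ a → l ≤ b → ∀ x ∈ W a, ∀ y ∈ W b, (c v x ↔ c v y)

lemma step {V : Type} (p : ℕ) (m : ℕ → ℕ) (hm : Monotone m) (c : (Fin p → V) → V → Prop)
    (Vs : ℕ → Finset V) (k : ℕ) (W : ℕ → Finset V) (φ : ℕ → ℕ) (h : Inv p m c Vs k W φ) :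
    ∃ W' φ', Inv p m c Vs (k + 1) W' φ' ∧ ∀ i < k, W' i = W i ∧ φ' i = φ i := by
  classical
  obtain ⟨S, hSsub, hScard⟩ : ∃ S ⊆ W k, S.card = m k := by
    apply Finset.exists_subset_card_eq
    rw [← gg_self p m k]
    exact h.high k le_rfl
  set U : Finset V := (Finset.range k).biUnion W ∪ S with hU
  have hUcard : U.card ≤ ∑ i ∈ Finset.range (k + 1), m i := by
    rw [Finset.sum_range_succ]
    refine (Finset.card_union_le _ _).trans ?_
    refine Nat.add_le_add ?_ hScard.le
    refine Finset.card_biUnion_le.trans (Finset.sum_le_sum ?_)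
    intro i hi
    exact (h.low i (Finset.mem_range.1 hi)).le
  set T : Finset (Fin p → V) := Fintype.piFinset (fun _ => U) with hT
  have hTcard : T.powerset.card ≤ ee p m k := by
    rw [Finset.card_powerset, hT, Fintype.card_piFinset]
    simp only [Finset.prod_const, Finset.card_univ, Fintype.card_fin]
    exact Nat.pow_le_pow_right (by norm_num) (Nat.pow_le_pow_left hUcard p)
  let col : V → Finset (Fin p → V) := fun x => T.filter (fun v => c v x)
  have hex : ∀ i, ∃ τ : T.powerset, gg p m (k + 1) (k + 1 + i) ≤
      ((W (k + 1 + i)).filter (fun x => col x = τ)).card := by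
    intro i
    have h1 := h.high (k + 1 + i) (by omega)
    rw [gg_succ p m k _ (by omega)] at h1
    obtain ⟨τ, hτ, hle⟩ := Finset.exists_le_card_fiber_of_mul_le_card_of_maps_to
      (s := W (k + 1 + i)) (t := T.powerset) (f := col) (n := gg p m (k + 1) (k + 1 + i))
      (fun x _ => Finset.mem_powerset.2 (Finset.filter_subset _ _))
      ⟨∅, Finset.empty_mem_powerset _⟩
      ((Nat.mul_le_mul_right _ hTcard).trans h1)
    exact ⟨⟨τ, hτ⟩, hle⟩
  choose f hf using hex
  obtain ⟨τ, hτ⟩ := Finite.exists_infinite_fiber f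
  have hinf : {i | f i = τ}.Infinite := Set.infinite_coe_iff.1 hτ
  let ψ : ℕ → ℕ := Nat.nth (fun i => f i = τ)
  have hψm : StrictMono ψ := Nat.nth_strictMono hinf
  have hψ : ∀ i, f (ψ i) = τ := fun i => Nat.nth_mem_of_infinite hinf i
  let idx : ℕ → ℕ := fun i => if i ≤ k then i else k + 1 + ψ (i - (k + 1))
  have hidx1 : ∀ i, i ≤ k → idx i = i := fun i hi => by simp [idx, hi]
  have hidx2 : ∀ i, idx (k + 1 + i) = k + 1 + ψ i := fun i => by
    have : ¬ (k + 1 + i ≤ k) := by omega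
    simp [idx, this]
  have hidxm : StrictMono idx := by
    intro a b hab
    rcases Nat.lt_or_ge k a with ha | ha
    · obtain ⟨a, rfl⟩ := Nat.exists_eq_add_of_lt ha
      obtain ⟨b, rfl⟩ := Nat.exists_eq_add_of_lt (ha.trans hab)
      have e1 : k + a + 1 = k + 1 + a := by omega
      have e2 : k + b + 1 = k + 1 + b := by omega
      rw [e1, e2, hidx2, hidx2]
      have := hψm (show a < b by omega)
      omega
    · rw [hidx1 a ha]
      rcases Nat.lt_or_ge k b with hb | hb
      · obtain ⟨b, rfl⟩ := Nat.exists_eq_add_of_lt hb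
        have e2 : k + b + 1 = k + 1 + b := by omega
        rw [e2, hidx2]
        omega
      · rw [hidx1 b hb]; exact hab
  let W' : ℕ → Finset V := fun i => if i < k then W i else if i = k then S else
    (W (idx i)).filter (fun x => col x = τ)
  have hW1 : ∀ i, i < k → W' i = W i := fun i hi => by simp [W', hi]
  have hW2 : W' k = S := by simp [W']
  have hW3 : ∀ i, W' (k + 1 + i) = (W (idx (k + 1 + i))).filter (fun x => col x = τ) :=
    fun i => by
      have h1 : ¬ (k + 1 + i < k) := by omega
      have h2 : ¬ (k + 1 + i = k) := by omega
      simp only [W', h1, h2, if_false]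
  have hWsub : ∀ i, W' i ⊆ W (idx i) := by
    intro i
    rcases Nat.lt_trichotomy i k with hi | hi | hi
    · rw [hW1 i hi, hidx1 i hi.le]
    · subst hi; rw [hW2, hidx1 _ le_rfl]; exact hSsub
    · obtain ⟨i, rfl⟩ := Nat.exists_eq_add_of_le (show k + 1 ≤ i from hi)
      rw [hW3]; exact Finset.filter_subset _ _
  refine ⟨W', φ ∘ idx, ⟨h.mono.comp hidxm, fun i => (hWsub i).trans (h.sub _), ?_, ?_, ?_⟩, ?_⟩
  · intro i hi
    rcases Nat.lt_or_ge i k with hik | hik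
    · rw [hW1 i hik, h.low i hik]
    · obtain rfl : i = k := by omega
      rw [hW2, hScard]
  · intro i hi
    obtain ⟨i, rfl⟩ := Nat.exists_eq_add_of_le hi
    rw [hW3, hidx2]
    have h1 := hf (ψ i)
    rw [hψ] at h1
    refine le_trans ?_ h1
    apply gg_mono p m hm
    have := hψm.le_apply (x := i)
    omega
  · intro l hl v hv a b ha hb x hx y hy
    rcases Nat.lt_or_ge k l with hkl | hkl
    · obtain rfl : l = k + 1 := by omega
      obtain ⟨a, rfl⟩ := Nat.exists_eq_add_of_le ha
      obtain ⟨b, rfl⟩ := Nat.exists_eq_add_of_le hb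
      rw [hW3] at hx hy
      have hx2 := (Finset.mem_filter.1 hx).2
      have hy2 := (Finset.mem_filter.1 hy).2
      have hvT : v ∈ T := by
        rw [hT, Fintype.mem_piFinset]
        intro j
        obtain ⟨i, hi, hvi⟩ := hv j
        rw [hU, Finset.mem_union]
        rcases Nat.lt_or_ge i k with hik | hik
        · left
          rw [hW1 i hik] at hvi
          exact Finset.mem_biUnion.2 ⟨i, Finset.mem_range.2 hik, hvi⟩
        · right
          obtain rfl : i = k := by omega
          rwa [hW2] at hvi
      have hcx : c v x ↔ v ∈ col x := by simp [col, hvT]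
      have hcy : c v y ↔ v ∈ col y := by simp [col, hvT]
      rw [hcx, hcy, hx2, hy2]
    · refine h.hom l hkl v ?_ (idx a) (idx b) (ha.trans hidxm.le_apply)
        (hb.trans hidxm.le_apply) x (hWsub a hx) y (hWsub b hy)
      intro j
      obtain ⟨i, hi, hvi⟩ := hv j
      exact ⟨i, hi, by rwa [hW1 i (by omega)] at hvi⟩
  · intro i hi
    exact ⟨hW1 i hi, by simp [hidx1 i hi.le]⟩

lemma key {V : Type} (p : ℕ) (hp : 0 < p) (m : ℕ → ℕ) (hm : Monotone m) (c : (Fin p → V) → V → Prop)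
    (Vs : ℕ → Finset V) (hVs : ∀ i, gg p m 0 i ≤ (Vs i).card) :
    ∃ Vs' : ℕ → Finset V, SubseqOfSubsets Vs Vs' ∧ (∀ i, m i ≤ (Vs' i).card) ∧
      ∀ l, ∀ v : Fin p → V, (∀ j, ∃ i, i < l ∧ v j ∈ Vs' i) →
        ∀ a b, l ≤ a → l ≤ b → ∀ x ∈ Vs' a, ∀ y ∈ Vs' b, (c v x ↔ c v y) := by
  have hstep := step p m hm c Vs
  choose F G hI hE using hstep
  let st : (k : ℕ) → {s : (ℕ → Finset V) × (ℕ → ℕ) // Inv p m c Vs k s.1 s.2} := fun k =>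
    Nat.rec (motive := fun k => {s : (ℕ → Finset V) × (ℕ → ℕ) // Inv p m c Vs k s.1 s.2})
      ⟨(Vs, id), ⟨strictMono_id, fun _ => subset_rfl, fun i hi => absurd hi (Nat.not_lt_zero i),
        fun i _ => hVs i, by
          intro l hl v hv a b ha hb x hx y hy
          obtain ⟨i, hi, _⟩ := hv ⟨0, hp⟩
          exact absurd (lt_of_lt_of_le hi hl) (Nat.not_lt_zero i)⟩⟩
      (fun k s => ⟨(F k s.1.1 s.1.2 s.2, G k s.1.1 s.1.2 s.2), hI k _ _ s.2⟩) k
  have hst : ∀ k, ∀ i < k, (st (k + 1)).1.1 i = (st k).1.1 i ∧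
      (st (k + 1)).1.2 i = (st k).1.2 i := fun k => hE k _ _ (st k).2
  have hst2 : ∀ i d, (st (i + 1 + d)).1.1 i = (st (i + 1)).1.1 i ∧
      (st (i + 1 + d)).1.2 i = (st (i + 1)).1.2 i := by
    intro i d
    induction d with
    | zero => exact ⟨rfl, rfl⟩
    | succ d ih =>
      have := hst (i + 1 + d) i (by omega)
      exact ⟨this.1.trans ih.1, this.2.trans ih.2⟩
  have hst3 : ∀ i k, i < k → (st k).1.1 i = (st (i + 1)).1.1 i ∧
      (st k).1.2 i = (st (i + 1)).1.2 i := by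
    intro i k hik
    obtain ⟨d, rfl⟩ := Nat.exists_eq_add_of_le (show i + 1 ≤ k from hik)
    exact hst2 i d
  refine ⟨fun i => (st (i + 1)).1.1 i, ⟨fun i => (st (i + 1)).1.2 i, ?_, ?_⟩, ?_, ?_⟩
  · refine strictMono_nat_of_lt_succ fun i => ?_
    rw [← (hst3 i (i + 1 + 1) (by omega)).2]
    exact (st (i + 1 + 1)).2.mono (Nat.lt_succ_self i)
  · intro i
    exact (st (i + 1)).2.sub i
  · intro i
    exact ((st (i + 1)).2.low i (Nat.lt_succ_self i)).ge
  · intro l v hv a b ha hb x hx y hy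
    have hk := (st (max a b + 1)).2.hom l (by omega) v
    refine hk ?_ a b ha hb x ?_ y ?_
    · intro j
      obtain ⟨i, hi, hvi⟩ := hv j
      refine ⟨i, hi, ?_⟩
      rw [(hst3 i _ (by omega)).1]; exact hvi
    · rw [(hst3 a _ (by omega)).1]; exact hx
    · rw [(hst3 b _ (by omega)).1]; exact hy

lemma incr_mono {V : Type} {q : ℕ} {Vs Vs' : ℕ → Finset V} (h : SubseqOfSubsets Vs Vs')
    {w : Fin q → V} (hw : IsIncrTuple Vs' w) : IsIncrTuple Vs w := by
  obtain ⟨φ, hφ, hs⟩ := h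
  obtain ⟨idx, hi, hm⟩ := hw
  exact ⟨φ ∘ idx, hφ.comp hi, fun j => hs _ (hm j)⟩

lemma subseq_trans {V : Type} {A B C : ℕ → Finset V} (h : SubseqOfSubsets A B)
    (h' : SubseqOfSubsets B C) : SubseqOfSubsets A C := by
  obtain ⟨φ, hφ, hs⟩ := h
  obtain ⟨ψ, hψ, hs'⟩ := h'
  exact ⟨φ ∘ ψ, hφ.comp hψ, fun j => (hs' j).trans (hs _)⟩

lemma main (p q : ℕ) (hp : 0 < p) (hpq : p ≤ q) : ∀ n' : ℕ → ℕ, ∃ n : ℕ → ℕ,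
    ∀ (V : Type) (c : (Fin q → V) → Prop) (Vs : ℕ → Finset V), (∀ i, n i ≤ (Vs i).card) →
      ∃ Vs' : ℕ → Finset V, SubseqOfSubsets Vs Vs' ∧ (∀ i, n' i ≤ (Vs' i).card) ∧
        ∀ w w' : Fin q → V, IsIncrTuple Vs' w → IsIncrTuple Vs' w' →
          (∀ j : Fin p, w (Fin.castLE hpq j) = w' (Fin.castLE hpq j)) → (c w ↔ c w') := by
  induction q, hpq using Nat.le_induction with
  | base =>
    intro n'
    refine ⟨n', fun V c Vs hVs => ⟨Vs, ⟨id, strictMono_id, fun _ => subset_rfl⟩, hVs, ?_⟩⟩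
    intro w w' _ _ h
    have : w = w' := funext fun j => h j
    rw [this]
  | succ q hpq ih =>
    intro n'
    obtain ⟨n₁, hn₁⟩ := ih n'
    let m : ℕ → ℕ := fun i => ∑ j ∈ Finset.range (i + 1), n₁ j
    have hm : Monotone m := by
      intro a b hab
      exact Finset.sum_le_sum_of_subset (Finset.range_subset_range.2 (by omega))
    have hnm : ∀ i, n₁ i ≤ m i := by
      intro i
      exact Finset.single_le_sum (f := n₁) (fun _ _ => Nat.zero_le _)
        (Finset.mem_range.2 (Nat.lt_succ_self i))
    refine ⟨gg q m 0, fun V c Vs hVs => ?_⟩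
    obtain ⟨Vs₁, hsub₁, hcard₁, hhom₁⟩ := key q (hp.trans_le hpq) m hm
      (fun v x => c (Fin.snoc (α := fun _ => V) v x)) Vs hVs
    let c₁ : (Fin q → V) → Prop := fun v => ∃ x, IsIncrTuple Vs₁ (Fin.snoc (α := fun _ => V) v x) ∧
      c (Fin.snoc (α := fun _ => V) v x)
    obtain ⟨Vs₂, hsub₂, hcard₂, hhom₂⟩ := hn₁ V c₁ Vs₁ (fun i => (hnm i).trans (hcard₁ i))
    have hinit : ∀ w : Fin (q + 1) → V, IsIncrTuple Vs₂ w →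
        IsIncrTuple Vs₂ (fun j : Fin q => w j.castSucc) := by
      rintro w ⟨idx, hi, hw⟩
      exact ⟨fun j => idx j.castSucc, fun a b hab => hi (Fin.castSucc_lt_castSucc_iff.2 hab),
        fun j => hw _⟩
    have hsn : ∀ w : Fin (q + 1) → V,
        Fin.snoc (α := fun _ => V) (fun j : Fin q => w j.castSucc) (w (Fin.last q)) = w :=
      fun w => Fin.snoc_init_self (α := fun _ => V) w
    have hkey : ∀ (v : Fin q → V) (x y : V), IsIncrTuple Vs₁ (Fin.snoc (α := fun _ => V) v x) →
        IsIncrTuple Vs₁ (Fin.snoc (α := fun _ => V) v y) →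
        c (Fin.snoc (α := fun _ => V) v x) → c (Fin.snoc (α := fun _ => V) v y) := by
      rintro v x y ⟨i1, hi1, h1⟩ ⟨i2, hi2, h2⟩ hc
      have hx : x ∈ Vs₁ (i1 (Fin.last q)) := by simpa using h1 (Fin.last q)
      have hy : y ∈ Vs₁ (i2 (Fin.last q)) := by simpa using h2 (Fin.last q)
      rcases le_total (i1 (Fin.last q)) (i2 (Fin.last q)) with hle | hle
      · refine (hhom₁ (i1 (Fin.last q)) v ?_ _ _ le_rfl hle x hx y hy).1 hc
        intro j
        exact ⟨i1 j.castSucc, hi1 (Fin.castSucc_lt_last j), by simpa using h1 j.castSucc⟩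
      · refine (hhom₁ (i2 (Fin.last q)) v ?_ _ _ hle le_rfl x hx y hy).1 hc
        intro j
        exact ⟨i2 j.castSucc, hi2 (Fin.castSucc_lt_last j), by simpa using h2 j.castSucc⟩
    have hc₁ : ∀ w : Fin (q + 1) → V, IsIncrTuple Vs₂ w →
        (c w ↔ c₁ (fun j : Fin q => w j.castSucc)) := by
      intro w hw
      have hw1 := incr_mono hsub₂ hw
      constructor
      · intro h
        exact ⟨w (Fin.last q), by rwa [hsn], by rwa [hsn]⟩
      · rintro ⟨x, hx, hcx⟩
        have := hkey _ x (w (Fin.last q)) hx (by rwa [hsn]) hcx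
        rwa [hsn] at this
    refine ⟨Vs₂, subseq_trans hsub₁ hsub₂, hcard₂, ?_⟩
    intro w w' hw hw' heq
    rw [hc₁ w hw, hc₁ w' hw']
    exact hhom₂ _ _ (hinit w hw) (hinit w' hw') (fun j => heq j)

end HomogAux

/-- For all `q ≥ 2`, `1 ≤ p < q` and every sequence `n'` of positive
integers there is a sequence `n` of positive integers such that: for every `q`-uniform
hypergraph `H` and pairwise disjoint finite vertex sets `Vs` with `|Vs i| ≥ n i`,
there is a subsequence of subsets `Vs'` with `|Vs' i| ≥ n' i` for all `i` such that
`H` together with `Vs'` is `p`-homogeneous. -/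
theorem stmt_6 (q p : ℕ) (hq : 2 ≤ q) (hp : 1 ≤ p) (hpq : p < q)
    (n' : ℕ → ℕ) (hn' : ∀ i, 0 < n' i) :
    ∃ n : ℕ → ℕ, (∀ i, 0 < n i) ∧
      ∀ (V : Type) (H : Set (Finset V)), IsUniform q H →
        ∀ Vs : ℕ → Finset V, (∀ i j, i ≠ j → Disjoint (Vs i) (Vs j)) →
          (∀ i, n i ≤ (Vs i).card) →
          ∃ Vs' : ℕ → Finset V, SubseqOfSubsets Vs Vs' ∧
            (∀ i, n' i ≤ (Vs' i).card) ∧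
            PHomog q H Vs' p (le_of_lt hpq) := by
  obtain ⟨n, hn⟩ := HomogAux.main p q hp hpq.le n'
  refine ⟨fun i => n i + 1, fun i => Nat.succ_pos _, ?_⟩
  intro V H _ Vs _ hVs
  obtain ⟨Vs', hsub, hcard, hhom⟩ := hn V (fun w => tupleEdge w ∈ H) Vs
    (fun i => (Nat.le_succ _).trans (hVs i))
  refine ⟨Vs', hsub, hcard, ?_⟩
  intro v _
  by_cases hex : ∃ w : Fin q → V, IsIncrTuple Vs' w ∧
      (∀ j : Fin p, w (Fin.castLE hpq.le j) = v j) ∧ tupleEdge w ∈ H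
  · obtain ⟨w, hw, hwv, hwH⟩ := hex
    left
    intro w' hw' hwv'
    exact (hhom w w' hw hw' (fun j => (hwv j).trans (hwv' j).symm)).1 hwH
  · right
    intro w hw hwv hwH
    exact hex ⟨w, hw, hwv, hwH⟩
end

section
/- Let d ≥ 1 and let F be a family of nonempty compact convex subsets of ℝ^d. Suppose that every infinite subfamily of F contains d+1 members having a common point. Then there exists a finite set P of points of ℝ^d such that every member of F contains at least one point of P. -/
open Filter Topology

/-- `AlmostEmpty U C n K`: for `U`-almost all `i₁`, for `U`-almost all `i₂`, ..., the set
`K ∩ C i₁ ∩ ... ∩ C iₙ` is empty. -/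
def AlmostEmpty {ι E : Type*} (U : Ultrafilter ι) (C : ι → Set E) : ℕ → Set E → Prop
  | 0, K => K = ∅
  | n + 1, K => ∀ᶠ i in (U : Filter ι), AlmostEmpty U C n (K ∩ C i)

/-- Limits along `U` of points chosen in `C i ∩ A`. -/
def limSet {ι E : Type*} [TopologicalSpace E] (U : Ultrafilter ι) (C : ι → Set E)
    (A : Set E) : Set E :=
  {p | ∃ z : ι → E, (∀ᶠ i in (U : Filter ι), z i ∈ C i ∩ A) ∧ Tendsto z U (𝓝 p)}

theorem almostEmpty_empty {ι E : Type*} (U : Ultrafilter ι) (C : ι → Set E) (n : ℕ) :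
    AlmostEmpty U C n ∅ := by
  induction n with
  | zero => rfl
  | succ n ih => simpa [AlmostEmpty] using ih

theorem exists_lim {ι E : Type*} [TopologicalSpace E] (U : Ultrafilter ι) (z : ι → E)
    {K : Set E} (hK : IsCompact K) (hz : ∀ᶠ i in (U : Filter ι), z i ∈ K) :
    ∃ p ∈ K, Tendsto z U (𝓝 p) := by
  obtain ⟨p, hp, h⟩ := hK.ultrafilter_le_nhds' (U.map z) hz
  exact ⟨p, hp, h⟩

theorem almostEmpty_step {ι E : Type*} [TopologicalSpace E] [T2Space E] (U : Ultrafilter ι)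
    (C : ι → Set E) (hC : ∀ i, IsCompact (C i)) (A A' : Set E) (hA : limSet U C A ⊆ A')
    (m : ℕ) : ∀ K, IsCompact K → AlmostEmpty U C m (A' ∩ K) →
      AlmostEmpty U C (m + 1) (A ∩ K) := by
  induction m with
  | zero =>
    intro K hK h
    change A' ∩ K = ∅ at h
    change ∀ᶠ i in (U : Filter ι), A ∩ K ∩ C i = ∅
    by_contra hcon
    rw [← Ultrafilter.eventually_not] at hcon
    obtain ⟨i0, hi0⟩ := hcon.exists
    have hne : Nonempty E := ⟨(Set.nonempty_iff_ne_empty.2 hi0).some⟩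
    have : ∀ i, ∃ z, ¬ (A ∩ K ∩ C i = ∅) → z ∈ A ∩ K ∩ C i := by
      intro i
      by_cases hi : A ∩ K ∩ C i = ∅
      · exact ⟨hne.some, fun h => absurd hi h⟩
      · obtain ⟨z, hz⟩ := Set.nonempty_iff_ne_empty.2 hi
        exact ⟨z, fun _ => hz⟩
    choose z hz using this
    have hz' : ∀ᶠ i in (U : Filter ι), z i ∈ A ∩ K ∩ C i := hcon.mono hz
    obtain ⟨p, hpK, hp⟩ := exists_lim U z hK (hz'.mono fun i hi => hi.1.2)
    have : p ∈ A' ∩ K := ⟨hA ⟨z, hz'.mono fun i hi => ⟨hi.2, hi.1.1⟩, hp⟩, hpK⟩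
    rw [h] at this
    exact this
  | succ m ih =>
    intro K hK h
    change ∀ᶠ i in (U : Filter ι), AlmostEmpty U C (m + 1) (A ∩ K ∩ C i)
    change ∀ᶠ i in (U : Filter ι), AlmostEmpty U C m (A' ∩ K ∩ C i) at h
    filter_upwards [h] with i hi
    rw [Set.inter_assoc] at hi ⊢
    exact ih _ (hK.inter (hC i)) hi

section geom

variable {ι E : Type*} [NormedAddCommGroup E] [InnerProductSpace ℝ E] [FiniteDimensional ℝ E]

theorem exists_unit (A : AffineSubspace ℝ E) (D : Set E) (hD : IsCompact D) (hDc : Convex ℝ D)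
    (x : E) (hxA : x ∈ A) (hxD : x ∉ D) (hne : (D ∩ A).Nonempty) :
    ∃ u ∈ A.direction, ‖u‖ = 1 ∧ ∀ z ∈ D ∩ A, 0 ≤ inner ℝ u (z - x) := by
  have hcl : IsClosed (A : Set E) := A.closed_of_finiteDimensional
  have hcomp : IsCompact (D ∩ A) := hD.inter_right hcl
  have hconv : Convex ℝ (D ∩ (A : Set E)) := hDc.inter A.convex
  obtain ⟨y, hy, hmin⟩ := exists_norm_eq_iInf_of_complete_convex hne hcomp.isComplete hconv x
  rw [norm_eq_iInf_iff_real_inner_le_zero hconv hy] at hmin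
  have hyx : y - x ≠ 0 := by
    intro h
    rw [sub_eq_zero] at h
    exact hxD (h ▸ hy.1)
  have hn : 0 < ‖y - x‖ := norm_pos_iff.2 hyx
  refine ⟨‖y - x‖⁻¹ • (y - x), A.direction.smul_mem _ ?_, ?_, ?_⟩
  · exact AffineSubspace.vsub_mem_direction hy.2 hxA
  · rw [norm_smul, norm_inv, norm_norm, inv_mul_cancel₀ hn.ne']
  · intro z hz
    rw [real_inner_smul_left]
    apply mul_nonneg (by positivity)
    have h1 := hmin z hz
    have h2 : inner ℝ (y - x) (z - x) = inner ℝ (y - x) (y - x) - inner ℝ (x - y) (z - y) := by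
      rw [← neg_sub y x, inner_neg_left, sub_neg_eq_add, ← inner_add_right]
      congr 1
      abel
    rw [h2]
    have := real_inner_self_nonneg (x := y - x)
    linarith

theorem limSet_subset (U : Ultrafilter ι) (C : ι → Set E) (A : AffineSubspace ℝ E) :
    limSet U C A ⊆ A := by
  rintro p ⟨z, hz, hp⟩
  exact A.closed_of_finiteDimensional.mem_of_tendsto hp (hz.mono fun i hi => hi.2)

theorem span_limSet_lt (U : Ultrafilter ι) (C : ι → Set E) (hC : ∀ i, IsCompact (C i))
    (hcv : ∀ i, Convex ℝ (C i)) (hnull : ∀ x, ∀ᶠ i in (U : Filter ι), x ∉ C i)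
    (A : AffineSubspace ℝ E) (hA : (A : Set E).Nonempty) :
    affineSpan ℝ (limSet U C A) < A := by
  refine lt_of_le_of_ne (affineSpan_le.2 (limSet_subset U C A)) ?_
  intro hEq
  obtain ⟨t, htL, hts, hti⟩ := exists_affineIndependent ℝ E (limSet U C (A : Set E))
  have htfin : t.Finite := by
    have := finite_of_fin_dim_affineIndependent ℝ hti
    exact Set.toFinite t
  rw [hEq] at hts
  have htne : t.Nonempty := by
    rw [← affineSpan_nonempty ℝ, hts]; exact hA
  lift t to Finset E using htfin
  have htne' : t.Nonempty := by simpa using htne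
  have hcard : (0 : ℝ) < t.card := by exact_mod_cast htne'.card_pos
  have htA : ∀ p ∈ t, p ∈ A := fun p hp => limSet_subset U C A (htL hp)
  set x : E := ∑ p ∈ t, (t.card : ℝ)⁻¹ • p with hx
  have hxA : x ∈ A := by
    have := A.convex.sum_mem (t := t) (w := fun _ => (t.card : ℝ)⁻¹) (z := fun p => p)
      (fun _ _ => by positivity) (by simp [hcard.ne']) htA
    exact this
  have hsum : ∑ p ∈ t, (p - x) = 0 := by
    rw [Finset.sum_sub_distrib, Finset.sum_const, hx, ← Finset.smul_sum, ← Nat.cast_smul_eq_nsmul ℝ,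
      smul_smul, mul_inv_cancel₀ hcard.ne', one_smul, sub_self]
  have hne : ∀ᶠ i in (U : Filter ι), (C i ∩ A).Nonempty := by
    obtain ⟨p, hp⟩ := htne
    obtain ⟨z, hz, -⟩ := htL hp
    exact hz.mono fun i hi => ⟨_, hi⟩
  have hu : ∀ i, ∃ u : E, (x ∉ C i ∧ (C i ∩ A).Nonempty) → (u ∈ A.direction ∧ ‖u‖ = 1 ∧
      ∀ z ∈ C i ∩ A, 0 ≤ inner ℝ u (z - x)) := by
    intro i
    by_cases h : x ∉ C i ∧ (C i ∩ A).Nonempty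
    · obtain ⟨u, h1, h2, h3⟩ := exists_unit A (C i) (hC i) (hcv i) x hxA h.1 h.2
      exact ⟨u, fun _ => ⟨h1, h2, h3⟩⟩
    · exact ⟨0, fun h' => absurd h' h⟩
  choose u hu using hu
  have hu' := ((hnull x).and hne).mono hu
  obtain ⟨v, hv, huv⟩ := exists_lim U u (isCompact_sphere (0 : E) 1)
    (hu'.mono fun i hi => by simpa using hi.2.1)
  have hv1 : ‖v‖ = 1 := by simpa using hv
  have hvA : v ∈ A.direction :=
    (A.direction.closed_of_finiteDimensional).mem_of_tendsto huv (hu'.mono fun i hi => hi.1)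
  have hpos : ∀ p ∈ t, 0 ≤ inner ℝ v (p - x) := by
    intro p hp
    obtain ⟨z, hz, hzp⟩ := htL hp
    have : Tendsto (fun i => (inner ℝ (u i) (z i - x) : ℝ)) U (𝓝 (inner ℝ v (p - x))) :=
      huv.inner (hzp.sub_const x)
    refine ge_of_tendsto this ?_
    filter_upwards [hu', hz] with i hi hzi
    exact hi.2.2 _ hzi
  have hz0 : ∑ p ∈ t, (inner ℝ v (p - x) : ℝ) = 0 := by
    rw [← inner_sum, hsum, inner_zero_right]
  have hall := (Finset.sum_eq_zero_iff_of_nonneg hpos).1 hz0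
  have hle : A ≤ AffineSubspace.mk' x (ℝ ∙ v)ᗮ := by
    rw [← hts, affineSpan_le]
    intro p hp
    rw [SetLike.mem_coe, AffineSubspace.mem_mk', Submodule.mem_orthogonal_singleton_iff_inner_right]
    exact hall p hp
  have hdir := AffineSubspace.direction_le hle hvA
  rw [AffineSubspace.direction_mk', Submodule.mem_orthogonal_singleton_iff_inner_right,
    inner_self_eq_zero] at hdir
  simp [hdir] at hv1

theorem almostEmpty_affine (U : Ultrafilter ι) (C : ι → Set E) (hC : ∀ i, IsCompact (C i))
    (hcv : ∀ i, Convex ℝ (C i)) (hnull : ∀ x, ∀ᶠ i in (U : Filter ι), x ∉ C i) (n : ℕ) :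
    ∀ A : AffineSubspace ℝ E, Module.finrank ℝ A.direction ≤ n →
      AlmostEmpty U C (n + 1) (A : Set E) := by
  induction n with
  | zero =>
    intro A hA
    rcases (A : Set E).eq_empty_or_nonempty with h | ⟨x, hx⟩
    · rw [h]; exact almostEmpty_empty U C _
    have hd : A.direction = ⊥ := Submodule.finrank_eq_zero.1 (Nat.le_zero.1 hA)
    change ∀ᶠ i in (U : Filter ι), (A : Set E) ∩ C i = ∅
    filter_upwards [hnull x] with i hi
    rw [Set.eq_empty_iff_forall_notMem]
    rintro y ⟨hy, hyC⟩
    have := AffineSubspace.vsub_mem_direction hy hx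
    rw [hd, Submodule.mem_bot, vsub_eq_sub, sub_eq_zero] at this
    exact hi (this ▸ hyC)
  | succ n ih =>
    intro A hA
    rcases (A : Set E).eq_empty_or_nonempty with h | hne
    · rw [h]; exact almostEmpty_empty U C _
    have hlt := span_limSet_lt U C hC hcv hnull A hne
    have key : AlmostEmpty U C (n + 1) (affineSpan ℝ (limSet U C (A : Set E)) : Set E) := by
      rcases (affineSpan ℝ (limSet U C (A : Set E)) : Set E).eq_empty_or_nonempty with h | hne'
      · rw [h]; exact almostEmpty_empty U C _
      apply ih
      have := Submodule.finrank_lt_finrank_of_lt (AffineSubspace.direction_lt_of_nonempty hlt hne')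
      omega
    change ∀ᶠ i in (U : Filter ι), AlmostEmpty U C n _ at key
    change ∀ᶠ i in (U : Filter ι), AlmostEmpty U C (n + 1) _
    filter_upwards [key] with i hi
    exact almostEmpty_step U C hC _ _ (subset_affineSpan ℝ _) n _ (hC i) hi

end geom

/-- Invariant for the inductive selection. -/
def SelInv {ι E : Type*} (U : Ultrafilter ι) (C : ι → Set E) (N : ℕ) (G : Finset ι) : Prop :=
  ∀ s ⊆ G, ∀ k, s.card + k = N → AlmostEmpty U C k (⋂ i ∈ s, C i)

theorem selInv_extend {ι E : Type*} [DecidableEq ι] (U : Ultrafilter ι) (C : ι → Set E) (N : ℕ)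
    (hfree : ∀ i, ∀ᶠ j in (U : Filter ι), j ≠ i)
    (G : Finset ι) (hG : SelInv U C N G) : ∃ j, j ∉ G ∧ SelInv U C N (insert j G) := by
  have h1 : ∀ᶠ j in (U : Filter ι), ∀ i ∈ G, j ≠ i :=
    (Filter.eventually_all_finset G).2 fun i _ => hfree i
  have h2 : ∀ᶠ j in (U : Filter ι), ∀ s ∈ G.powerset, ∀ k ∈ Finset.range (N + 1),
      s.card + (k + 1) = N → AlmostEmpty U C k ((⋂ i ∈ s, C i) ∩ C j) := by
    refine (Filter.eventually_all_finset _).2 fun s hs => ?_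
    refine (Filter.eventually_all_finset _).2 fun k _ => ?_
    by_cases h : s.card + (k + 1) = N
    · have := hG s (Finset.mem_powerset.1 hs) (k + 1) h
      change ∀ᶠ j in (U : Filter ι), _ at this
      exact this.mono fun j hj _ => hj
    · exact Filter.Eventually.of_forall fun j hj => absurd hj h
  obtain ⟨j, hj1, hj2⟩ := (h1.and h2).exists
  have hjG : j ∉ G := fun h => hj1 j h rfl
  refine ⟨j, hjG, ?_⟩
  intro s hs k hk
  by_cases hjs : j ∈ s
  · have hs' : s.erase j ⊆ G := Finset.subset_insert_iff.1 hs
    have hc := Finset.card_erase_add_one hjs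
    have := hj2 (s.erase j) (Finset.mem_powerset.2 hs') k (Finset.mem_range.2 (by omega)) (by omega)
    rw [← Finset.insert_erase hjs, Finset.set_biInter_insert, Set.inter_comm]
    exact this
  · exact hG s ((Finset.subset_insert_iff_of_notMem hjs).1 hs) k hk

theorem exists_infinite_sel {ι E : Type*} (U : Ultrafilter ι) (C : ι → Set E) (N : ℕ)
    (hfree : ∀ i, ∀ᶠ j in (U : Filter ι), j ≠ i) (h0 : AlmostEmpty U C N Set.univ) :
    ∃ S : Set ι, S.Infinite ∧ ∀ T : Finset ι, (T : Set ι) ⊆ S → T.card = N →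
      ⋂ i ∈ T, C i = ∅ := by
  classical
  have hE : SelInv U C N ∅ := by
    intro s hs k hk
    have : s = ∅ := Finset.subset_empty.1 hs
    subst this
    have : k = N := by simpa using hk
    subst this
    simpa using h0
  choose g hg1 hg2 using selInv_extend U C N hfree
  let f : ℕ → {G : Finset ι // SelInv U C N G} := fun n =>
    Nat.rec ⟨∅, hE⟩ (fun _ G => ⟨insert (g G.1 G.2) G.1, hg2 G.1 G.2⟩) n
  have hf : ∀ n, (f (n + 1)).1 = insert (g (f n).1 (f n).2) (f n).1 := fun n => rfl
  have hmono : Monotone fun n => (f n).1 := monotone_nat_of_le_succ fun n => by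
    rw [hf]; exact Finset.subset_insert _ _
  have hcard : ∀ n, (f n).1.card = n := by
    intro n
    induction n with
    | zero => rfl
    | succ n ih => rw [hf, Finset.card_insert_of_notMem (hg1 _ _), ih]
  refine ⟨⋃ n, ((f n).1 : Set ι), ?_, ?_⟩
  · intro hfin
    have h := Finset.card_le_card (s := (f (hfin.toFinset.card + 1)).1) (t := hfin.toFinset)
      (fun i hi => hfin.mem_toFinset.2 (Set.mem_iUnion.2 ⟨hfin.toFinset.card + 1, hi⟩))
    have h2 := (hcard (hfin.toFinset.card + 1)).symm.le.trans h
    omega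
  · intro T hT hTN
    have : ∃ n, T ⊆ (f n).1 := by
      have hdir : Directed (· ⊆ ·) fun n => ((f n).1 : Set ι) :=
        Monotone.directed_le (f := fun n => ((f n).1 : Set ι)) fun a b hab => by
          exact_mod_cast hmono hab
      obtain ⟨n, hn⟩ := hdir.exists_mem_subset_of_finset_subset_biUnion hT
      exact ⟨n, by exact_mod_cast hn⟩
    obtain ⟨n, hn⟩ := this
    exact (f n).2 T hn 0 (by simpa using hTN)

/-- **Corollary `(ℵ₀, d+1)`-theorem for convex sets.**
If `F` is a family of nonempty compact convex subsets of `ℝ^d` such that every infinite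
subfamily contains `d+1` members having a common point, then all members of `F` can be
pierced by finitely many points. -/
theorem stmt_8 (d : ℕ) (hd : 1 ≤ d)
    (F : Set (Set (EuclideanSpace ℝ (Fin d))))
    (hne : ∀ A ∈ F, A.Nonempty)
    (hcpt : ∀ A ∈ F, IsCompact A)
    (hcvx : ∀ A ∈ F, Convex ℝ A)
    (hyp : ∀ G ⊆ F, G.Infinite →
      ∃ T : Finset (Set (EuclideanSpace ℝ (Fin d))), ↑T ⊆ G ∧ T.card = d + 1 ∧
        ∃ x : EuclideanSpace ℝ (Fin d), ∀ A ∈ T, x ∈ A) :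
    ∃ P : Finset (EuclideanSpace ℝ (Fin d)), ∀ A ∈ F, ∃ p ∈ P, p ∈ A := by
  classical
  by_contra hP
  push Not at hP
  let C : F → Set (EuclideanSpace ℝ (Fin d)) := Subtype.val
  let 𝓛 : Filter F := ⨅ x, 𝓟 {i : F | x ∉ C i}
  have hNe : NeBot 𝓛 := by
    refine (hasBasis_iInf_principal_finite fun x => {i : F | x ∉ C i}).neBot_iff.2 ?_
    intro t ht
    obtain ⟨A, hA, hAt⟩ := hP ht.toFinset
    refine ⟨⟨A, hA⟩, ?_⟩
    simp only [Set.mem_iInter, Set.mem_ofPred_eq]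
    intro x hx
    exact hAt x (ht.mem_toFinset.2 hx)
  let U : Ultrafilter F := Ultrafilter.of 𝓛
  have hnull : ∀ x, ∀ᶠ i in (U : Filter F), x ∉ C i := fun x =>
    Ultrafilter.of_le 𝓛 (mem_iInf_of_mem x (mem_principal_self _))
  have hfree : ∀ i : F, ∀ᶠ j in (U : Filter F), j ≠ i := by
    intro i
    obtain ⟨x, hx⟩ := hne i.1 i.2
    filter_upwards [hnull x] with j hj hji
    subst hji
    exact hj hx
  have hAE : AlmostEmpty U C (d + 1) Set.univ := by
    have := almostEmpty_affine U C (fun i => hcpt i.1 i.2) (fun i => hcvx i.1 i.2) hnull d ⊤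
      ((Submodule.finrank_le _).trans (by simp))
    simpa using this
  obtain ⟨S, hS, hST⟩ := exists_infinite_sel U C (d + 1) hfree hAE
  obtain ⟨T, hTG, hTc, x, hx⟩ := hyp (Subtype.val '' S) (by rintro _ ⟨i, -, rfl⟩; exact i.2)
    (hS.image Subtype.val_injective.injOn)
  have hTF : ∀ A ∈ T, A ∈ F := fun A hA => by
    obtain ⟨i, -, rfl⟩ := hTG hA
    exact i.2
  have hmap : (T.subtype (· ∈ F)).map (Function.Embedding.subtype _) = T :=
    Finset.subtype_map_of_mem hTF
  have hempty := hST (T.subtype (· ∈ F)) (by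
    intro i hi
    obtain ⟨j, hj, hji⟩ := hTG (Finset.mem_subtype.1 hi)
    rwa [← Subtype.ext hji]) (by
    rw [← hTc]
    conv_rhs => rw [← hmap]
    rw [Finset.card_map])
  have : x ∈ ⋂ i ∈ T.subtype (· ∈ F), C i := by
    simp only [Set.mem_iInter]
    intro i hi
    exact hx _ (Finset.mem_subtype.1 hi)
  rw [hempty] at this
  exact this
end

section
/- Let d ≥ 1 and let F be a family of nonempty compact convex subsets of ℝ^d. Suppose that every infinite subfamily of F contains d+1 members that are all intersected by a single hyperplane. Then there exist finitely many hyperplanes in ℝ^d such that every member of F intersects at least one of them. -/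
/-- A hyperplane in `ℝ^d`: an affine subspace which is the level set of a nonzero linear
functional, i.e. a `(d-1)`-dimensional affine subspace. -/
def IsHyperplane {d : ℕ} (W : Set (EuclideanSpace ℝ (Fin d))) : Prop :=
  ∃ (f : EuclideanSpace ℝ (Fin d) →ₗ[ℝ] ℝ) (c : ℝ), f ≠ 0 ∧ W = {x | f x = c}

/-- In a linearly ordered real vector space every subspace of dimension at least `n` contains a
chain of `n` positive vectors of strictly increasing archimedean classes. -/
lemma chain_ordered {V : Type*} [AddCommGroup V] [LinearOrder V] [IsOrderedAddMonoid V]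
    [Module ℝ V] [PosSMulStrictMono ℝ V] [FiniteDimensional ℝ V] (n : ℕ) :
    ∀ W : Submodule ℝ V, n ≤ Module.finrank ℝ W →
      ∃ g : ℕ → V, (∀ i < n, g i ∈ W) ∧
        ∀ j < n, ∀ h ∈ Submodule.span ℝ (g '' Set.Iio j), h < g j := by
  have : PosSMulMono ℝ V := inferInstance
  have : SMulPosStrictMono ℝ V :=
    ⟨by
      intro v hv a b hab
      have h := smul_lt_smul_of_pos_left hv (sub_pos.mpr hab)
      rw [smul_zero, sub_smul] at h
      exact sub_pos.mp h⟩
  have : IsStrictOrderedModule ℝ V := {}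
  induction n with
  | zero => intro W _; exact ⟨0, by simp, by simp⟩
  | succ n ih =>
    intro W hW
    let b := Module.finBasis ℝ W
    let x : V := ∑ i, |(b i : V)|
    have hxW : x ∈ W := by
      refine Submodule.sum_mem _ fun i _ => ?_
      rcases abs_choice (b i : V) with h | h <;> rw [h]
      · exact (b i).2
      · exact W.neg_mem (b i).2
    have hx0 : 0 ≤ x := Finset.sum_nonneg fun i _ => abs_nonneg _
    have hbx : ∀ i, |(b i : V)| ≤ x := fun i =>
      Finset.single_le_sum (f := fun i => |(b i : V)|) (fun i _ => abs_nonneg _) (Finset.mem_univ i)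
    have hbound : ∀ y ∈ W, ∃ C : ℝ, |y| ≤ C • x := by
      intro y hy
      refine ⟨∑ i, |b.repr ⟨y, hy⟩ i|, ?_⟩
      have h1 : y = ∑ i, b.repr ⟨y, hy⟩ i • (b i : V) := by
        have := congrArg (Subtype.val) (b.sum_repr ⟨y, hy⟩)
        rw [Submodule.coe_sum] at this
        exact this.symm
      calc |y| = |∑ i, b.repr ⟨y, hy⟩ i • (b i : V)| := by rw [← h1]
        _ ≤ ∑ i, |b.repr ⟨y, hy⟩ i • (b i : V)| := Finset.abs_sum_le_sum_abs _ _
        _ ≤ ∑ i, |b.repr ⟨y, hy⟩ i| • x := by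
            refine Finset.sum_le_sum fun i _ => ?_
            rw [abs_smul]
            exact smul_le_smul_of_nonneg_left (hbx i) (abs_nonneg _)
        _ = _ := by rw [Finset.sum_smul]
    have hx : 0 < x := by
      rcases hx0.lt_or_eq with h | h
      · exact h
      · exfalso
        have : W = ⊥ := by
          rw [eq_bot_iff]
          intro y hy
          obtain ⟨C, hC⟩ := hbound y hy
          rw [← h, smul_zero] at hC
          simpa using abs_nonpos_iff.mp hC
        rw [this] at hW
        simp at hW
    let W' : Submodule ℝ V :=
      { carrier := {y | y ∈ W ∧ ∀ ε : ℝ, 0 < ε → |y| ≤ ε • x}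
        zero_mem' := ⟨W.zero_mem, fun ε hε => by
          simpa using smul_nonneg hε.le hx0⟩
        add_mem' := by
          rintro y z ⟨hy, hy'⟩ ⟨hz, hz'⟩
          refine ⟨W.add_mem hy hz, fun ε hε => ?_⟩
          calc |y + z| ≤ |y| + |z| := abs_add_le _ _
            _ ≤ (ε / 2) • x + (ε / 2) • x := add_le_add (hy' _ (by positivity)) (hz' _ (by positivity))
            _ = ε • x := by rw [← add_smul]; congr 1; ring
        smul_mem' := by
          rintro c y ⟨hy, hy'⟩
          refine ⟨W.smul_mem c hy, fun ε hε => ?_⟩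
          rw [abs_smul]
          have hc : 0 < |c| + 1 := by positivity
          calc |c| • |y| ≤ (|c| + 1) • |y| :=
                smul_le_smul_of_nonneg_right (by linarith) (abs_nonneg _)
            _ ≤ (|c| + 1) • ((ε / (|c| + 1)) • x) :=
                smul_le_smul_of_nonneg_left (hy' _ (by positivity)) hc.le
            _ = ε • x := by rw [smul_smul]; congr 1; field_simp }
    have hW'W : W' ≤ W := fun y hy => hy.1
    have hW'x : ∀ y ∈ W', y < x := by
      intro y hy
      calc y ≤ |y| := le_abs_self y
        _ ≤ (1 / 2 : ℝ) • x := hy.2 _ (by norm_num)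
        _ < (1 : ℝ) • x := smul_lt_smul_of_pos_right (by norm_num) hx
        _ = x := one_smul _ _
    have hsup : W ≤ W' ⊔ Submodule.span ℝ {x} := by
      intro y hy
      obtain ⟨C, hC⟩ := hbound y hy
      have hC1 := (abs_le.mp hC).1
      have hC2 := (abs_le.mp hC).2
      let S : Set ℝ := {c | c • x ≤ y}
      have hSne : S.Nonempty := ⟨-C, by simpa [S] using hC1⟩
      have hSb : BddAbove S := ⟨C, fun c hc => by
        have : c • x ≤ C • x := le_trans hc hC2
        exact le_of_smul_le_smul_right this hx⟩
      let c := sSup S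
      have h1 : ∀ ε : ℝ, 0 < ε → (c - ε) • x ≤ y := by
        intro ε hε
        obtain ⟨a, ha, hac⟩ := exists_lt_of_lt_csSup hSne (show c - ε < sSup S by
          simp only [c]; linarith)
        exact le_trans (smul_le_smul_of_nonneg_right hac.le hx0) ha
      have h2 : ∀ ε : ℝ, 0 < ε → y ≤ (c + ε) • x := by
        intro ε hε
        by_contra hcon
        have := le_csSup hSb (show c + ε ∈ S from (not_le.mp hcon).le)
        simp only [c] at this
        linarith
      have h3 : y - c • x ∈ W' := by
        refine ⟨W.sub_mem hy (W.smul_mem _ hxW), fun ε hε => ?_⟩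
        rw [abs_le]
        have e1 := h1 ε hε
        have e2 := h2 ε hε
        rw [sub_smul] at e1
        rw [add_smul] at e2
        constructor
        · rw [neg_le_sub_iff_le_add]
          rw [sub_le_iff_le_add] at e1
          exact e1
        · rw [sub_le_iff_le_add, add_comm]
          exact e2
      rw [Submodule.mem_sup]
      exact ⟨_, h3, c • x, Submodule.smul_mem _ _ (Submodule.mem_span_singleton_self x), by abel⟩
    have hfr : n ≤ Module.finrank ℝ W' := by
      have e1 := Submodule.finrank_mono hsup
      have e2 := Submodule.finrank_add_le_finrank_add_finrank W' (Submodule.span ℝ {x})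
      have e3 : Module.finrank ℝ (Submodule.span ℝ {x}) ≤ 1 := by
        simpa using finrank_span_le_card (R := ℝ) ({x} : Set V)
      omega
    obtain ⟨g, hg1, hg2⟩ := ih W' hfr
    have himg : ∀ j ≤ n, (fun i => if i < n then g i else x) '' Set.Iio j = g '' Set.Iio j := by
      intro j hj
      refine Set.image_congr fun i hi => ?_
      have : i < n := lt_of_lt_of_le hi hj
      simp [this]
    refine ⟨fun i => if i < n then g i else x, ?_, ?_⟩
    · intro i _
      by_cases h : i < n
      · simpa [h] using hW'W (hg1 i h)
      · simpa [h] using hxW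
    · intro j hj h hh
      rw [himg j (by omega)] at hh
      by_cases hjn : j < n
      · simpa [hjn] using hg2 j hjn h hh
      · have : j = n := by omega
        subst this
        simp only [lt_irrefl, if_false]
        apply hW'x
        refine Submodule.span_le.mpr ?_ hh
        rintro _ ⟨i, hi, rfl⟩
        exact hg1 i hi

lemma chain_pred {V : Type*} [AddCommGroup V] [Module ℝ V] [FiniteDimensional ℝ V]
    (P : V → Prop) (hadd : ∀ v w, P v → P w → P (v + w))
    (hsmul : ∀ (c : ℝ) v, 0 < c → P v → P (c • v)) (h0 : ¬ P 0)
    (htot : ∀ v, v ≠ 0 → P v ∨ P (-v)) :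
    ∃ g : ℕ → V, ∀ j < Module.finrank ℝ V,
      ∀ h ∈ Submodule.span ℝ (g '' Set.Iio j), P (g j - h) := by
  classical
  let : LinearOrder V :=
    { le := fun a b => a = b ∨ P (b - a)
      lt := fun a b => P (b - a)
      le_refl := fun a => Or.inl rfl
      le_trans := by
        rintro a b c (rfl | h1) (rfl | h2)
        · exact Or.inl rfl
        · exact Or.inr h2
        · exact Or.inr h1
        · refine Or.inr ?_
          have := hadd _ _ h1 h2
          rwa [show b - a + (c - b) = c - a by abel] at this
      lt_iff_le_not_ge := by
        intro a b
        constructor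
        · intro h
          refine ⟨Or.inr h, ?_⟩
          rintro (rfl | h2)
          · exact h0 (by simpa using h)
          · exact h0 (by simpa using hadd _ _ h h2)
        · rintro ⟨rfl | h, h2⟩
          · exact absurd (Or.inl rfl) h2
          · exact h
      le_antisymm := by
        rintro a b (rfl | h1) (h | h2)
        · rfl
        · rfl
        · exact h.symm
        · exact absurd (by simpa using hadd _ _ h1 h2) h0
      le_total := by
        intro a b
        by_cases hab : a = b
        · exact Or.inl (Or.inl hab)
        · rcases htot (b - a) (sub_ne_zero.mpr (Ne.symm hab)) with h | h
          · exact Or.inl (Or.inr h)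
          · exact Or.inr (Or.inr (by simpa using h))
      toDecidableLE := Classical.decRel _ }
  have : IsOrderedAddMonoid V :=
    { add_le_add_left := by
        rintro a b (rfl | h) c
        · exact Or.inl rfl
        · exact Or.inr (by simpa using h) }
  have : PosSMulStrictMono ℝ V :=
    ⟨by
      intro c hc a b hab
      have := hsmul c _ hc (show P (b - a) from hab)
      rw [smul_sub] at this
      exact this⟩
  obtain ⟨g, -, hg⟩ := chain_ordered (V := V) (Module.finrank ℝ V) ⊤ (by simp)
  exact ⟨g, fun j hj h hh => hg j hj h hh⟩

lemma small_pert {d : ℕ} {A : Set (EuclideanSpace ℝ (Fin d))} (hA : IsCompact A)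
    (h g : (EuclideanSpace ℝ (Fin d) →ₗ[ℝ] ℝ) × ℝ) (hpos : ∀ x ∈ A, 0 < h.1 x + h.2) :
    ∀ᶠ ε : ℝ in nhdsWithin 0 (Set.Ioi 0), ∀ x ∈ A, 0 < (h + ε • g).1 x + (h + ε • g).2 := by
  apply Filter.Eventually.filter_mono nhdsWithin_le_nhds
  apply hA.eventually_forall_of_forall_eventually
  intro x hx
  have c1 := LinearMap.continuous_of_finiteDimensional h.1
  have c2 := LinearMap.continuous_of_finiteDimensional g.1
  have hc : Continuous fun z : ℝ × EuclideanSpace ℝ (Fin d) =>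
      (h + z.1 • g).1 z.2 + (h + z.1 • g).2 := by
    simp only [Prod.fst_add, Prod.smul_fst, LinearMap.add_apply, LinearMap.smul_apply,
      Prod.snd_add, Prod.smul_snd, smul_eq_mul]
    fun_prop
  exact hc.continuousAt.eventually (lt_mem_nhds (by simpa using hpos x hx))

/-- Every sign pattern on `T` is realised by a function in the span of `g 0, …, g (|T|-1)`. -/
def SignRich {d : ℕ} (g : ℕ → (EuclideanSpace ℝ (Fin d) →ₗ[ℝ] ℝ) × ℝ)
    (T : Finset (Set (EuclideanSpace ℝ (Fin d)))) : Prop :=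
  ∀ P : Set (Set (EuclideanSpace ℝ (Fin d))),
    ∃ h ∈ Submodule.span ℝ (g '' Set.Iio T.card), ∀ A ∈ T, ∀ x ∈ A,
      (A ∈ P → 0 < h.1 x + h.2) ∧ (A ∉ P → h.1 x + h.2 < 0)

lemma no_transversal {d : ℕ} (g : ℕ → (EuclideanSpace ℝ (Fin d) →ₗ[ℝ] ℝ) × ℝ)
    (T : Finset (Set (EuclideanSpace ℝ (Fin d)))) (hT : T.card = d + 1) (hS : SignRich g T)
    (W : Set (EuclideanSpace ℝ (Fin d))) (hW : IsHyperplane W)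
    (hTW : ∀ A ∈ T, (A ∩ W).Nonempty) : False := by
  classical
  obtain ⟨f, c, hf, rfl⟩ := hW
  choose a ha using hTW
  let L : ((EuclideanSpace ℝ (Fin d) →ₗ[ℝ] ℝ) × ℝ) →ₗ[ℝ] (T → ℝ) :=
    { toFun := fun v A => v.1 (a A.1 A.2) + v.2
      map_add' := by intro v w; ext A; simp; ring
      map_smul' := by intro r v; ext A; simp; ring }
  have hfr : Module.finrank ℝ ((EuclideanSpace ℝ (Fin d) →ₗ[ℝ] ℝ) × ℝ) =
      Module.finrank ℝ (T → ℝ) := by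
    simp [hT, Module.finrank_linearMap]
  have hninj : ¬ Function.Injective L := by
    intro hinj
    have : L (f, -c) = L 0 := by
      ext A
      have := (ha A.1 A.2).2
      simp only [Set.mem_setOf_eq] at this
      simp [L, this]
    have := hinj this
    exact hf (congrArg Prod.fst this)
  have hnsurj : ¬ Function.Surjective L := fun h =>
    hninj ((LinearMap.injective_iff_surjective_of_finrank_eq_finrank hfr).mpr h)
  have hlt : LinearMap.range L < ⊤ := lt_top_iff_ne_top.mpr fun h =>
    hnsurj (LinearMap.range_eq_top.mp h)
  obtain ⟨φ, hφ, hker⟩ := Submodule.exists_le_ker_of_lt_top _ hlt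
  let l : T → ℝ := fun A => φ (Pi.single A 1)
  have hφl : ∀ w : T → ℝ, φ w = ∑ A, w A * l A := by
    intro w
    conv_lhs => rw [LinearMap.pi_apply_eq_sum_univ φ w]
    refine Finset.sum_congr rfl fun A _ => ?_
    simp only [l, smul_eq_mul]
    congr 2
    ext B
    simp [Pi.single_apply, eq_comm]
  have hl : ∃ A, l A ≠ 0 := by
    by_contra hcon
    push Not at hcon
    apply hφ
    ext w
    simp [hcon, l] at *
  obtain ⟨A₀, hA₀⟩ := hl
  obtain ⟨h, -, hh⟩ := hS {A | ∃ hA : A ∈ T, 0 < l ⟨A, hA⟩}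
  have hz : φ (L h) = 0 := hker ⟨h, rfl⟩
  rw [hφl] at hz
  have hterm : ∀ A : T, (0 < l A → 0 < L h A) ∧ (¬ 0 < l A → L h A < 0) := by
    intro A
    obtain ⟨h1, h2⟩ := hh A.1 A.2 _ (ha A.1 A.2).1
    exact ⟨fun hp => h1 ⟨A.2, hp⟩, fun hp => h2 fun ⟨_, hp'⟩ => hp hp'⟩
  have hnn : ∀ A ∈ Finset.univ, 0 ≤ L h A * l A := by
    intro A _
    by_cases hp : 0 < l A
    · exact (mul_pos ((hterm A).1 hp) hp).le
    · exact mul_nonneg_of_nonpos_of_nonpos ((hterm A).2 hp).le (not_lt.mp hp)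
  have := (Finset.sum_eq_zero_iff_of_nonneg hnn).mp hz A₀ (Finset.mem_univ _)
  rcases mul_eq_zero.mp this with h3 | h3
  · by_cases hp : 0 < l A₀
    · exact absurd h3 ((hterm A₀).1 hp).ne'
    · exact absurd h3 ((hterm A₀).2 hp).ne
  · exact hA₀ h3

lemma sign_step {d : ℕ} (U : Filter (Set (EuclideanSpace ℝ (Fin d))))
    (g : ℕ → (EuclideanSpace ℝ (Fin d) →ₗ[ℝ] ℝ) × ℝ)
    (T : Finset (Set (EuclideanSpace ℝ (Fin d)))) (hT : ∀ A ∈ T, IsCompact A)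
    (hsing : ∀ A ∈ T, ∀ᶠ B in U, B ≠ A)
    (hg : ∀ h ∈ Submodule.span ℝ (g '' Set.Iio T.card),
      ∀ᶠ A in U, ∀ x ∈ A, 0 < (g T.card - h).1 x + (g T.card - h).2)
    (hS : SignRich g T) :
    ∀ᶠ B in U, SignRich g (insert B T) := by
  classical
  have hnot : ∀ᶠ B in U, B ∉ T := by
    have := (Filter.eventually_all_finset T).mpr hsing
    filter_upwards [this] with B hB hBT
    exact hB B hBT rfl
  have key : ∀ Q ∈ T.powerset, ∀ᶠ B in U, ∀ σ : Bool,
      ∃ h ∈ Submodule.span ℝ (g '' Set.Iio (T.card + 1)),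
        (∀ A ∈ T, ∀ x ∈ A, (A ∈ Q → 0 < h.1 x + h.2) ∧ (A ∉ Q → h.1 x + h.2 < 0)) ∧
        ∀ x ∈ B, (σ = true → 0 < h.1 x + h.2) ∧ (σ = false → h.1 x + h.2 < 0) := by
    intro Q _
    obtain ⟨h, hspan, hh⟩ := hS (Q : Set (Set (EuclideanSpace ℝ (Fin d))))
    rw [Filter.eventually_all]
    intro σ
    have hpert : ∀ A ∈ T, ∀ᶠ ε : ℝ in nhdsWithin 0 (Set.Ioi 0), ∀ x ∈ A,
        (A ∈ Q → 0 < (h + ε • ((if σ then (1 : ℝ) else -1) • g T.card)).1 x +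
          (h + ε • ((if σ then (1 : ℝ) else -1) • g T.card)).2) ∧
        (A ∉ Q → (h + ε • ((if σ then (1 : ℝ) else -1) • g T.card)).1 x +
          (h + ε • ((if σ then (1 : ℝ) else -1) • g T.card)).2 < 0) := by
      intro A hA
      by_cases hAQ : A ∈ Q
      · filter_upwards [small_pert (hT A hA) h ((if σ then (1 : ℝ) else -1) • g T.card)
          (fun x hx => (hh A hA x hx).1 hAQ)] with ε hε x hx
        exact ⟨fun _ => hε x hx, fun hn => absurd hAQ hn⟩
      · filter_upwards [small_pert (hT A hA) (-h) (-((if σ then (1 : ℝ) else -1) • g T.card))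
          (fun x hx => by
            have := (hh A hA x hx).2 hAQ
            simp only [Prod.fst_neg, Prod.snd_neg, LinearMap.neg_apply]
            linarith)] with ε hε x hx
        refine ⟨fun hn => absurd hn hAQ, fun _ => ?_⟩
        have := hε x hx
        rw [smul_neg, ← neg_add] at this
        simp only [Prod.fst_neg, Prod.snd_neg, LinearMap.neg_apply] at this
        linarith
    obtain ⟨ε, hε, hε0⟩ := (((Filter.eventually_all_finset T).mpr hpert).and
      self_mem_nhdsWithin).exists
    have hε0 : 0 < ε := hε0
    have hsub : Submodule.span ℝ (g '' Set.Iio T.card) ≤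
        Submodule.span ℝ (g '' Set.Iio (T.card + 1)) :=
      Submodule.span_mono (Set.image_mono fun i hi => lt_trans hi (Nat.lt_succ_self _))
    have hgm : g T.card ∈ Submodule.span ℝ (g '' Set.Iio (T.card + 1)) :=
      Submodule.subset_span ⟨_, Nat.lt_succ_self _, rfl⟩
    have hmem := Submodule.add_mem _ (hsub hspan) (Submodule.smul_mem _ ε
      (Submodule.smul_mem _ (if σ then (1 : ℝ) else -1) hgm))
    cases σ with
    | true =>
      filter_upwards [hg (-(ε⁻¹ • h)) (Submodule.neg_mem _ (Submodule.smul_mem _ _ hspan))]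
        with B hB
      refine ⟨_, hmem, hε, fun x hx => ⟨fun _ => ?_, fun hn => by simp at hn⟩⟩
      have := mul_pos hε0 (hB x hx)
      simp at this ⊢
      field_simp at this
      linarith
    | false =>
      filter_upwards [hg (ε⁻¹ • h) (Submodule.smul_mem _ _ hspan)] with B hB
      refine ⟨_, hmem, hε, fun x hx => ⟨fun hn => by simp at hn, fun _ => ?_⟩⟩
      have := mul_pos hε0 (hB x hx)
      simp at this ⊢
      field_simp at this
      linarith
  filter_upwards [hnot, (Filter.eventually_all_finset _).mpr key] with B hBT hB
  intro P
  obtain ⟨h, hspan, h1, h2⟩ := hB (T.filter (· ∈ P)) (by simp) (decide (B ∈ P))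
  refine ⟨h, by rwa [Finset.card_insert_of_notMem hBT], ?_⟩
  intro A hA x hx
  rcases Finset.mem_insert.mp hA with rfl | hA
  · simpa using h2 x hx
  · simpa [hA] using h1 A hA x hx

/-- A family which is hit by finitely many hyperplanes. -/
def FinHit {d : ℕ} (S : Set (Set (EuclideanSpace ℝ (Fin d)))) : Prop :=
  ∃ H : Set (Set (EuclideanSpace ℝ (Fin d))), H.Finite ∧ (∀ W ∈ H, IsHyperplane W) ∧
    ∀ A ∈ S, ∃ W ∈ H, (A ∩ W).Nonempty

lemma FinHit.mono {d : ℕ} {S S' : Set (Set (EuclideanSpace ℝ (Fin d)))} (h : FinHit S)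
    (hs : S' ⊆ S) : FinHit S' := by
  obtain ⟨H, h1, h2, h3⟩ := h
  exact ⟨H, h1, h2, fun A hA => h3 A (hs hA)⟩

lemma FinHit.union {d : ℕ} {S S' : Set (Set (EuclideanSpace ℝ (Fin d)))} (h : FinHit S)
    (h' : FinHit S') : FinHit (S ∪ S') := by
  obtain ⟨H, h1, h2, h3⟩ := h
  obtain ⟨H', h1', h2', h3'⟩ := h'
  refine ⟨H ∪ H', h1.union h1', ?_, ?_⟩
  · rintro W (hW | hW)
    exacts [h2 W hW, h2' W hW]
  · rintro A (hA | hA)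
    · obtain ⟨W, hW, hAW⟩ := h3 A hA
      exact ⟨W, Or.inl hW, hAW⟩
    · obtain ⟨W, hW, hAW⟩ := h3' A hA
      exact ⟨W, Or.inr hW, hAW⟩

/-- The filter of subfamilies whose complement in `F` is hit by finitely many hyperplanes. -/
def hitFilter {d : ℕ} (F : Set (Set (EuclideanSpace ℝ (Fin d)))) :
    Filter (Set (EuclideanSpace ℝ (Fin d))) where
  sets := {S | FinHit (F \ S)}
  univ_sets := ⟨∅, Set.finite_empty, by simp, by simp⟩
  sets_of_superset := fun h hs => FinHit.mono h (Set.sdiff_subset_sdiff_right hs)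
  inter_sets := fun h h' => by
    have := FinHit.union h h'
    rwa [← Set.sdiff_inter] at this

lemma finHit_of_hyp (d : ℕ) (hd : 1 ≤ d)
    (F : Set (Set (EuclideanSpace ℝ (Fin d))))
    (hne : ∀ A ∈ F, A.Nonempty)
    (hcpt : ∀ A ∈ F, IsCompact A)
    (hcvx : ∀ A ∈ F, Convex ℝ A)
    (hyp : ∀ G ⊆ F, G.Infinite →
      ∃ T : Finset (Set (EuclideanSpace ℝ (Fin d))), ↑T ⊆ G ∧ T.card = d + 1 ∧
        ∃ W : Set (EuclideanSpace ℝ (Fin d)), IsHyperplane W ∧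
          ∀ A ∈ T, (A ∩ W).Nonempty) : FinHit F := by
  classical
  by_contra hbad
  have : (hitFilter F).NeBot := by
    refine ⟨fun h => hbad ?_⟩
    have : (∅ : Set (Set (EuclideanSpace ℝ (Fin d)))) ∈ hitFilter F := by rw [h]; trivial
    have h2 : FinHit (F \ ∅) := this
    simpa using h2
  let U : Ultrafilter (Set (EuclideanSpace ℝ (Fin d))) := Ultrafilter.of (hitFilter F)
  have hU : (U : Filter (Set (EuclideanSpace ℝ (Fin d)))) ≤ hitFilter F := Ultrafilter.of_le _
  have hFU : ∀ᶠ A in (U : Filter (Set (EuclideanSpace ℝ (Fin d)))), A ∈ F := by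
    apply hU
    change FinHit (F \ F)
    exact ⟨∅, Set.finite_empty, by simp, by simp⟩
  have hmiss : ∀ W : Set (EuclideanSpace ℝ (Fin d)), IsHyperplane W → ∀ᶠ A in (U : Filter (Set (EuclideanSpace ℝ (Fin d)))), ¬ (A ∩ W).Nonempty := by
    intro W hW
    apply hU
    change FinHit (F \ _)
    refine ⟨{W}, Set.finite_singleton _, by simpa using hW, ?_⟩
    rintro A ⟨_, hA⟩
    exact ⟨W, rfl, not_not.mp hA⟩
  have hsing : ∀ A ∈ F, ∀ᶠ B in (U : Filter (Set (EuclideanSpace ℝ (Fin d)))), B ≠ A := by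
    intro A hA
    obtain ⟨x, hx⟩ := hne A hA
    let f : EuclideanSpace ℝ (Fin d) →ₗ[ℝ] ℝ := (EuclideanSpace.proj (𝕜 := ℝ) (⟨0, hd⟩ : Fin d)).toLinearMap
    have hf : f ≠ 0 := by
      intro h
      have := LinearMap.congr_fun h (EuclideanSpace.single ⟨0, hd⟩ 1)
      simp [f] at this
    filter_upwards [hmiss {y | f y = f x} ⟨f, f x, hf, rfl⟩] with B hB hBA
    subst hBA
    exact hB ⟨x, hx, rfl⟩
  let P : (EuclideanSpace ℝ (Fin d) →ₗ[ℝ] ℝ) × ℝ → Prop := fun v =>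
    ∀ᶠ A in (U : Filter (Set (EuclideanSpace ℝ (Fin d)))), ∀ x ∈ A, 0 < v.1 x + v.2
  have htot : ∀ v, v ≠ 0 → P v ∨ P (-v) := by
    intro v hv
    have : ∀ᶠ A in (U : Filter (Set (EuclideanSpace ℝ (Fin d)))), (∀ x ∈ A, 0 < v.1 x + v.2) ∨
        (∀ x ∈ A, 0 < (-v).1 x + (-v).2) := by
      have hnz : ∀ᶠ A in (U : Filter (Set (EuclideanSpace ℝ (Fin d)))), ∀ x ∈ A, v.1 x + v.2 ≠ 0 := by
        by_cases hv1 : v.1 = 0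
        · refine Filter.Eventually.of_forall fun A x _ h => hv ?_
          rw [hv1] at h
          simp at h
          exact Prod.ext hv1 h
        · filter_upwards [hmiss {x | v.1 x = -v.2} ⟨v.1, -v.2, hv1, rfl⟩] with A hA x hx h
          exact hA ⟨x, hx, by simp only [Set.mem_setOf_eq]; linarith⟩
      filter_upwards [hnz, hFU] with A hA hAF
      by_contra hcon
      push Not at hcon
      obtain ⟨⟨x, hx, hx'⟩, ⟨y, hy, hy'⟩⟩ := hcon
      simp only [Prod.fst_neg, Prod.snd_neg, LinearMap.neg_apply] at hy'
      have hc : ContinuousOn (fun z => v.1 z + v.2) A :=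
        ((LinearMap.continuous_of_finiteDimensional v.1).add continuous_const).continuousOn
      have := (hcvx A hAF).isPreconnected.intermediate_value hx hy hc
      obtain ⟨z, hz, hz0⟩ := this (show (0 : ℝ) ∈ _ from ⟨hx', by linarith⟩)
      exact hA z hz hz0
    exact Ultrafilter.eventually_or.mp this
  obtain ⟨g, hg⟩ := chain_pred P
    (by
      intro v w hv hw
      filter_upwards [hv, hw] with A h1 h2 x hx
      have := h1 x hx
      have := h2 x hx
      simp only [Prod.fst_add, Prod.snd_add, LinearMap.add_apply]
      linarith)
    (by
      intro c v hc hv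
      filter_upwards [hv] with A h1 x hx
      have := mul_pos hc (h1 x hx)
      simp only [Prod.smul_fst, Prod.smul_snd, LinearMap.smul_apply, smul_eq_mul]
      linarith)
    (by
      intro h
      obtain ⟨A, hA, hAF⟩ := (h.and hFU).exists
      obtain ⟨x, hx⟩ := hne A hAF
      simpa using hA x hx)
    htot
  have hfr : Module.finrank ℝ ((EuclideanSpace ℝ (Fin d) →ₗ[ℝ] ℝ) × ℝ) = d + 1 := by
    simp [Module.finrank_linearMap]
  rw [hfr] at hg
  obtain ⟨G, hG⟩ := zorn_subset
    {G : Set (Set (EuclideanSpace ℝ (Fin d))) | G ⊆ F ∧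
      ∀ T : Finset (Set (EuclideanSpace ℝ (Fin d))), ↑T ⊆ G → T.card ≤ d + 1 → SignRich g T}
    (by
      intro c hc hchain
      rcases c.eq_empty_or_nonempty with rfl | hcne
      · refine ⟨∅, ⟨by simp, ?_⟩, by simp⟩
        intro T hT _
        have : T = ∅ := by simpa using hT
        subst this
        exact fun P => ⟨0, Submodule.zero_mem _, by simp⟩
      · refine ⟨⋃₀ c, ⟨Set.sUnion_subset fun s hs => (hc hs).1, ?_⟩,
          fun s hs => Set.subset_sUnion_of_mem hs⟩
        intro T hT hcard
        obtain ⟨s, hs, hTs⟩ := DirectedOn.exists_mem_subset_of_finset_subset_biUnion hcne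
          (f := id) (s := T) (by simpa [DirectedOn] using hchain.directedOn)
          (by simpa [Set.sUnion_eq_biUnion] using hT)
        exact (hc hs).2 T hTs hcard)
  have hGF := hG.prop.1
  have hGinf : G.Infinite := by
    intro hfin
    have h1 : ∀ T ∈ hfin.toFinset.powerset, ∀ᶠ B in (U : Filter (Set (EuclideanSpace ℝ (Fin d)))),
        T.card ≤ d → SignRich g (insert B T) := by
      intro T hT
      have hTG : ↑T ⊆ G := by
        intro A hA
        exact hfin.mem_toFinset.mp (Finset.mem_powerset.mp hT hA)
      by_cases hcard : T.card ≤ d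
      · filter_upwards [sign_step (U : Filter (Set (EuclideanSpace ℝ (Fin d)))) g T (fun A hA => hcpt A (hGF (hTG hA)))
          (fun A hA => hsing A (hGF (hTG hA))) (hg T.card (by omega))
          (hG.prop.2 T hTG (by omega))] with B hB _
        exact hB
      · exact Filter.Eventually.of_forall fun B h => absurd h hcard
    have h2 : ∀ A ∈ hfin.toFinset, ∀ᶠ B in (U : Filter (Set (EuclideanSpace ℝ (Fin d)))), B ≠ A := fun A hA =>
      hsing A (hGF (hfin.mem_toFinset.mp hA))
    obtain ⟨B, ⟨hB1, hB2⟩, hBF⟩ := ((((Filter.eventually_all_finset _).mpr h1).and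
      ((Filter.eventually_all_finset _).mpr h2)).and hFU).exists
    have hBG : B ∉ G := fun h => hB2 B (hfin.mem_toFinset.mpr h) rfl
    apply hBG
    refine hG.le_of_ge (y := insert B G) ⟨Set.insert_subset hBF hGF, ?_⟩
      (Set.subset_insert _ _) (Set.mem_insert _ _)
    intro T hT hcard
    by_cases hBT : B ∈ T
    · have hsub : T.erase B ∈ hfin.toFinset.powerset := by
        rw [Finset.mem_powerset]
        intro A hA
        obtain ⟨hne', hA⟩ := Finset.mem_erase.mp hA
        rcases hT hA with h | h
        · exact absurd h hne'
        · exact hfin.mem_toFinset.mpr h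
      have := hB1 _ hsub (by rw [Finset.card_erase_of_mem hBT]; omega)
      rwa [Finset.insert_erase hBT] at this
    · refine hG.prop.2 T ?_ hcard
      intro A hA
      rcases hT hA with h | h
      · exact absurd (h ▸ hA) hBT
      · exact h
  obtain ⟨T, hTG, hcard, W, hW, hTW⟩ := hyp G hGF hGinf
  exact no_transversal g T hcard (hG.prop.2 T hTG hcard.le) W hW hTW

/-- **`(ℵ₀, d+1)`-theorem for hyperplane transversals of convex sets.**
If `F` is a family of nonempty compact convex subsets of `ℝ^d` such that every infinite
subfamily contains `d+1` members all intersected by a single hyperplane, then all members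
of `F` can be hit by finitely many hyperplanes. -/
theorem stmt_9 (d : ℕ) (hd : 1 ≤ d)
    (F : Set (Set (EuclideanSpace ℝ (Fin d))))
    (hne : ∀ A ∈ F, A.Nonempty)
    (hcpt : ∀ A ∈ F, IsCompact A)
    (hcvx : ∀ A ∈ F, Convex ℝ A)
    (hyp : ∀ G ⊆ F, G.Infinite →
      ∃ T : Finset (Set (EuclideanSpace ℝ (Fin d))), ↑T ⊆ G ∧ T.card = d + 1 ∧
        ∃ W : Set (EuclideanSpace ℝ (Fin d)), IsHyperplane W ∧
          ∀ A ∈ T, (A ∩ W).Nonempty) :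
    ∃ (n : ℕ) (W : Fin n → Set (EuclideanSpace ℝ (Fin d))),
      (∀ i, IsHyperplane (W i)) ∧ ∀ A ∈ F, ∃ i, (A ∩ W i).Nonempty := by

  obtain ⟨H, hfin, hH, hit⟩ := finHit_of_hyp d hd F hne hcpt hcvx hyp
  obtain ⟨n, W, hW⟩ := hfin.fin_embedding
  refine ⟨n, W, fun i => hH _ (hW ▸ Set.mem_range_self i), fun A hA => ?_⟩
  obtain ⟨w, hw, hAw⟩ := hit A hA
  rw [← hW] at hw
  obtain ⟨i, rfl⟩ := hw
  exact ⟨i, hAw⟩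
end

section
/- Let d ≥ 1 and let F be a family of compact convex subsets of ℝ^d, each containing at least one point with all coordinates integers (a point of ℤ^d). Suppose that every infinite subfamily of F contains d+1 members whose intersection contains a point of ℤ^d. Then there exists a finite set P ⊆ ℤ^d such that every member of F contains at least one point of P. -/
/-- A point of `ℝ^d` all of whose coordinates are integers (a point of `ℤ^d`). -/
def IsLatticePoint {d : ℕ} (x : EuclideanSpace ℝ (Fin d)) : Prop :=
  ∀ i : Fin d, ∃ m : ℤ, x i = (m : ℝ)

theorem lattice_finite {d : ℕ} {A : Set (EuclideanSpace ℝ (Fin d))} (hA : IsCompact A) :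
    {x | x ∈ A ∧ IsLatticePoint x}.Finite := by
  obtain ⟨R, hR⟩ := hA.isBounded.exists_norm_le
  obtain ⟨N, hN⟩ := exists_nat_ge R
  refine ((Set.finite_Icc (fun _ : Fin d => -(N : ℤ)) (fun _ => (N : ℤ))).image
    (fun m : Fin d → ℤ => WithLp.toLp 2 (fun i => (m i : ℝ)))).subset ?_
  rintro x ⟨hx, hl⟩
  choose m hm using hl
  have hb : ∀ i, |(m i : ℝ)| ≤ N := by
    intro i
    rw [← hm i, ← Real.norm_eq_abs]
    exact (PiLp.norm_apply_le x i).trans ((hR x hx).trans hN)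
  refine ⟨m, ⟨fun i => ?_, fun i => ?_⟩, ?_⟩
  · have := (abs_le.1 (hb i)).1
    exact_mod_cast this
  · have := (abs_le.1 (hb i)).2
    exact_mod_cast this
  · ext i
    simp [hm i]

/-- **`(ℵ₀, d+1)`-theorem for piercing by lattice points.**
If `F` is a family of compact convex subsets of `ℝ^d`, each containing a lattice point,
such that every infinite subfamily contains `d+1` members whose intersection contains a
lattice point, then all members of `F` can be pierced by finitely many lattice points. -/
theorem stmt_10 (d : ℕ) (hd : 1 ≤ d)
    (F : Set (Set (EuclideanSpace ℝ (Fin d))))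
    (hcpt : ∀ A ∈ F, IsCompact A)
    (hcvx : ∀ A ∈ F, Convex ℝ A)
    (hlat : ∀ A ∈ F, ∃ x ∈ A, IsLatticePoint x)
    (hyp : ∀ G ⊆ F, G.Infinite →
      ∃ T : Finset (Set (EuclideanSpace ℝ (Fin d))), ↑T ⊆ G ∧ T.card = d + 1 ∧
        ∃ x : EuclideanSpace ℝ (Fin d), IsLatticePoint x ∧ ∀ A ∈ T, x ∈ A) :
    ∃ P : Finset (EuclideanSpace ℝ (Fin d)),
      (∀ p ∈ P, IsLatticePoint p) ∧ ∀ A ∈ F, ∃ p ∈ P, p ∈ A := by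
  classical
  -- take a maximal subfamily whose members pairwise share no lattice point
  let R : Set (EuclideanSpace ℝ (Fin d)) → Set (EuclideanSpace ℝ (Fin d)) → Prop :=
    fun A B => ¬ ∃ x, IsLatticePoint x ∧ x ∈ A ∧ x ∈ B
  obtain ⟨G, hG⟩ := zorn_subset {G | G ⊆ F ∧ G.Pairwise R} (by
    intro c hc hch
    refine ⟨⋃₀ c, ⟨Set.sUnion_subset fun s hs => (hc hs).1, ?_⟩,
      fun s hs => Set.subset_sUnion_of_mem hs⟩
    exact (Set.pairwise_sUnion hch.directedOn).2 fun s hs => (hc hs).2)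
  obtain ⟨hGF, hGR⟩ := hG.prop
  have hfin : G.Finite := by
    by_contra hinf
    obtain ⟨T, hTG, hT, x, hx, hxT⟩ := hyp G hGF hinf
    obtain ⟨A, hA, B, hB, hAB⟩ := Finset.one_lt_card.1 (show 1 < T.card by omega)
    exact hGR (hTG hA) (hTG hB) hAB ⟨x, hx, hxT A hA, hxT B hB⟩
  have hPfin : (⋃ A ∈ G, {x | x ∈ A ∧ IsLatticePoint x}).Finite :=
    hfin.biUnion fun A hA => lattice_finite (hcpt A (hGF hA))
  refine ⟨hPfin.toFinset, fun p hp => ?_, fun A hA => ?_⟩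
  · simp only [Set.Finite.mem_toFinset, Set.mem_iUnion] at hp
    obtain ⟨A, _, h⟩ := hp
    exact h.2
  · by_contra hno
    have key : ∀ B ∈ G, ∀ x, IsLatticePoint x → x ∈ A → x ∉ B := by
      intro B hB x hx hxA hxB
      refine hno ⟨x, ?_, hxA⟩
      simp only [Set.Finite.mem_toFinset, Set.mem_iUnion]
      exact ⟨B, hB, hxB, hx⟩
    have hins : insert A G ∈ {G | G ⊆ F ∧ G.Pairwise R} := by
      refine ⟨Set.insert_subset hA hGF, hGR.insert fun B hB _ => ⟨?_, ?_⟩⟩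
      · rintro ⟨x, hx, h1, h2⟩
        exact key B hB x hx h1 h2
      · rintro ⟨x, hx, h1, h2⟩
        exact key B hB x hx h2 h1
    have hAG : A ∈ G := hG.le_of_ge hins (Set.subset_insert A G) (Set.mem_insert A G)
    obtain ⟨x, hxA, hx⟩ := hlat A hA
    exact key A hAG x hx hxA hxA
end

section
/- Let d ≥ 1 and let F be a family of axis-parallel boxes in ℝ^d. Suppose that every infinite subfamily of F contains two boxes that are both intersected by a single axis-parallel hyperplane. Then there exist finitely many axis-parallel hyperplanes in ℝ^d such that every member of F intersects at least one of them. -/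
/-- An axis-parallel box in `ℝ^d`: a product of `d` nonempty compact intervals. -/
def IsBox {d : ℕ} (B : Set (EuclideanSpace ℝ (Fin d))) : Prop :=
  ∃ a b : Fin d → ℝ, (∀ i, a i ≤ b i) ∧ B = {x | ∀ i, x i ∈ Set.Icc (a i) (b i)}

/-- An axis-parallel hyperplane in `ℝ^d`: the set of points with a fixed value in one
coordinate. -/
def IsAxisParallelHyperplane {d : ℕ} (W : Set (EuclideanSpace ℝ (Fin d))) : Prop :=
  ∃ (j : Fin d) (c : ℝ), W = {x | x j = c}

/-- One-dimensional core: if every point is eventually missed by the intervals, then almost every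
interval is disjoint from almost every other. -/
theorem aux_disj {α : Type*} (U : Ultrafilter α) (a b : α → ℝ)
    (h : ∀ c, ∀ᶠ B in (U : Filter α), c ∉ Set.Icc (a B) (b B)) :
    ∀ᶠ B in (U : Filter α), ∀ᶠ B' in (U : Filter α),
      ∀ c, ¬ (c ∈ Set.Icc (a B) (b B) ∧ c ∈ Set.Icc (a B') (b B')) := by
  set L : Set ℝ := {c | ∀ᶠ B in (U : Filter α), c < a B} with hL
  set R : Set ℝ := {c | ∀ᶠ B in (U : Filter α), b B < c} with hR
  have hLR : ∀ c, c ∈ L ∨ c ∈ R := by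
    intro c
    have : ∀ᶠ B in (U : Filter α), c < a B ∨ b B < c := by
      filter_upwards [h c] with B hB
      by_contra! hc
      exact hB ⟨hc.1, hc.2⟩
    exact Ultrafilter.eventually_or.1 this
  have gL : ∀ B, b B ∈ L → ∀ᶠ B' in (U : Filter α),
      ∀ c, ¬ (c ∈ Set.Icc (a B) (b B) ∧ c ∈ Set.Icc (a B') (b B')) := by
    intro B hB
    have hB' : ∀ᶠ B' in (U : Filter α), b B < a B' := hB
    filter_upwards [hB'] with B' h1 c hc
    linarith [hc.1.2, hc.2.1]
  have gR : ∀ B, a B ∈ R → ∀ᶠ B' in (U : Filter α),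
      ∀ c, ¬ (c ∈ Set.Icc (a B) (b B) ∧ c ∈ Set.Icc (a B') (b B')) := by
    intro B hB
    have hB' : ∀ᶠ B' in (U : Filter α), b B' < a B := hB
    filter_upwards [hB'] with B' h1 c hc
    linarith [hc.1.1, hc.2.2]
  have hdown : ∀ x y, x < y → y ∈ L → x ∈ L := by
    intro x y hxy hy
    have hy' : ∀ᶠ B in (U : Filter α), y < a B := hy
    exact hy'.mono fun B hB => hxy.trans hB
  rcases L.eq_empty_or_nonempty with he | hne
  · refine Filter.Eventually.of_forall fun B => gR B ?_
    rcases hLR (a B) with h1 | h1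
    · rw [he] at h1; exact h1.elim
    · exact h1
  by_cases hbd : BddAbove L
  · filter_upwards [h (sSup L)] with B hB
    by_cases h1 : sSup L < a B
    · apply gR
      refine (hLR (a B)).resolve_left fun h2 => ?_
      exact absurd (le_csSup hbd h2) (not_le.2 h1)
    · have h2 : b B < sSup L := by
        by_contra! h2
        exact hB ⟨not_lt.1 h1, h2⟩
      obtain ⟨y, hy, hy'⟩ := exists_lt_of_lt_csSup hne h2
      exact gL B (hdown _ _ hy' hy)
  · refine Filter.Eventually.of_forall fun B => gL B ?_
    obtain ⟨y, hy, hy'⟩ := not_bddAbove_iff.1 hbd (b B)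
    exact hdown _ _ hy' hy

/-- **`(ℵ₀, 2)`-theorem for axis-parallel boxes and hyperplanes.**
If `F` is a family of axis-parallel boxes in `ℝ^d` such that every infinite subfamily
contains two boxes both intersected by a single axis-parallel hyperplane, then all members
of `F` can be hit by finitely many axis-parallel hyperplanes. -/
theorem stmt_11 (d : ℕ) (hd : 1 ≤ d)
    (F : Set (Set (EuclideanSpace ℝ (Fin d))))
    (hbox : ∀ B ∈ F, IsBox B)
    (hyp : ∀ G ⊆ F, G.Infinite →
      ∃ B₁ ∈ G, ∃ B₂ ∈ G, B₁ ≠ B₂ ∧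
        ∃ W : Set (EuclideanSpace ℝ (Fin d)), IsAxisParallelHyperplane W ∧
          (B₁ ∩ W).Nonempty ∧ (B₂ ∩ W).Nonempty) :
    ∃ (n : ℕ) (W : Fin n → Set (EuclideanSpace ℝ (Fin d))),
      (∀ i, IsAxisParallelHyperplane (W i)) ∧ ∀ B ∈ F, ∃ i, (B ∩ W i).Nonempty := by
  classical
  by_contra hno
  have hb' : ∀ B : Set (EuclideanSpace ℝ (Fin d)), ∃ a b : Fin d → ℝ, B ∈ F →
      (∀ i, a i ≤ b i) ∧ B = {x | ∀ i, x i ∈ Set.Icc (a i) (b i)} := by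
    intro B
    by_cases hB : B ∈ F
    · obtain ⟨a, b, h⟩ := hbox B hB
      exact ⟨a, b, fun _ => h⟩
    · exact ⟨0, 0, fun h => absurd h hB⟩
  choose a b hab using hb'
  have hit : ∀ B ∈ F, ∀ j c, (B ∩ {x | x j = c}).Nonempty ↔ c ∈ Set.Icc (a B j) (b B j) := by
    intro B hB j c
    obtain ⟨h1, h2⟩ := hab B hB
    constructor
    · rintro ⟨x, hx, hxc⟩
      rw [h2] at hx
      have := hx j
      rwa [show x j = c from hxc] at this
    · intro hc
      refine ⟨WithLp.toLp 2 (Function.update (a B) j c), ?_, ?_⟩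
      · refine h2.symm.subset ?_
        intro i
        by_cases hi : i = j
        · subst hi; simpa using hc
        · simpa [Function.update_of_ne hi] using h1 i
      · simp
  let H : Set (Set (EuclideanSpace ℝ (Fin d))) → Prop := fun S =>
    ∃ P : Finset (Fin d × ℝ), ∀ B ∈ S, B ∈ F → ∃ p ∈ P, p.2 ∈ Set.Icc (a B p.1) (b B p.1)
  let l : Filter (Set (EuclideanSpace ℝ (Fin d))) := Filter.comk H ⟨∅, by simp⟩
    (fun t ⟨P, hP⟩ s hs => ⟨P, fun B hB => hP B (hs hB)⟩)
    (fun s ⟨P, hP⟩ t ⟨Q, hQ⟩ => ⟨P ∪ Q, by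
      rintro B (hB | hB) hF
      · obtain ⟨p, hp, h⟩ := hP B hB hF
        exact ⟨p, Finset.mem_union_left _ hp, h⟩
      · obtain ⟨p, hp, h⟩ := hQ B hB hF
        exact ⟨p, Finset.mem_union_right _ hp, h⟩⟩)
  have hne : l.NeBot := by
    refine ⟨fun h => hno ?_⟩
    have h0 : (∅ : Set (Set (EuclideanSpace ℝ (Fin d)))) ∈ l := by rw [h]; trivial
    obtain ⟨P, hP⟩ : H ∅ᶜ := h0
    refine ⟨P.card, fun i => {x | x (P.equivFin.symm i).1.1 = (P.equivFin.symm i).1.2},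
      fun i => ⟨_, _, rfl⟩, fun B hB => ?_⟩
    obtain ⟨p, hp, h⟩ := hP B (by simp) hB
    refine ⟨P.equivFin ⟨p, hp⟩, ?_⟩
    rw [hit B hB]
    simpa using h
  let U := Ultrafilter.of l
  have hUl : (U : Filter _) ≤ l := Ultrafilter.of_le l
  have hUF : ∀ᶠ B in (U : Filter _), B ∈ F :=
    hUl (show H Fᶜ from ⟨∅, fun B hB hF => absurd hF hB⟩)
  have hmiss : ∀ j c, ∀ᶠ B in (U : Filter _), c ∉ Set.Icc (a B j) (b B j) := by
    intro j c
    refine hUl (show H _ from ⟨{(j, c)}, fun B hB _ => ⟨(j, c), by simp, ?_⟩⟩)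
    by_contra h
    exact hB h
  have hgood := Filter.eventually_all.2 fun j =>
    aux_disj U (fun B => a B j) (fun B => b B j) (hmiss j)
  let r : Set (EuclideanSpace ℝ (Fin d)) → Set (EuclideanSpace ℝ (Fin d)) → Prop :=
    fun B B' => ∀ j c, ¬ (c ∈ Set.Icc (a B j) (b B j) ∧ c ∈ Set.Icc (a B' j) (b B' j))
  have : Std.Symm r := ⟨fun x y h j c hc => h j c hc.symm⟩
  obtain ⟨f, hf, hr⟩ := exists_seq_of_forall_finset_exists'
    (fun B => B ∈ F ∧ ∀ᶠ B' in (U : Filter _), r B B') r (by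
      intro s hs
      have h1 : ∀ᶠ B' in (U : Filter _), ∀ x ∈ s, r x B' :=
        (Filter.eventually_all_finset s).2 fun x hx => (hs x hx).2
      obtain ⟨y, ⟨hy1, hy2⟩, hy3⟩ := ((hUF.and hgood).and h1).exists
      exact ⟨y, ⟨hy1, Filter.eventually_all.2 hy2⟩, hy3⟩)
  have hinj : Function.Injective f := by
    intro m n hmn
    by_contra hne'
    have h1 : r (f m) (f n) := hr hne'
    rw [← hmn] at h1
    have h2 := (hab (f m) (hf m).1).1 ⟨0, hd⟩
    exact h1 ⟨0, hd⟩ _ ⟨⟨le_rfl, h2⟩, ⟨le_rfl, h2⟩⟩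
  obtain ⟨B₁, ⟨m, rfl⟩, B₂, ⟨n, rfl⟩, hne', W, ⟨j, c, rfl⟩, h1, h2⟩ :=
    hyp (Set.range f) (by rintro _ ⟨n, rfl⟩; exact (hf n).1) (Set.infinite_range_of_injective hinj)
  rw [hit _ (hf _).1] at h1 h2
  have h3 : r (f m) (f n) := hr fun h => hne' (by rw [h])
  exact h3 j c ⟨h1, h2⟩
end

section
/- Let d ≥ 1 and let F_1, F_2, … be an infinite sequence of families of nonempty compact convex subsets of ℝ^d. Suppose that every infinite heterochromatic sequence of convex sets of (F_i)_{i∈ℕ} contains d+1 sets having a common point. Then there exists an index i and a finite set P of points of ℝ^d such that every member of F_i contains at least one point of P. -/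
open Filter Topology

section Aux

variable {α : Type*}

/-- Iterated tensor powers of an ultrafilter, as ultrafilters on lists. -/
noncomputable def powU (U : Ultrafilter α) : ℕ → Ultrafilter (List α)
  | 0 => pure []
  | n + 1 => Ultrafilter.bind U (fun a => (powU U n).map (fun l => a :: l))

theorem powU_zero (U : Ultrafilter α) (P : List α → Prop) :
    (∀ᶠ l in (powU U 0 : Filter (List α)), P l) ↔ P [] := Iff.rfl

theorem powU_succ (U : Ultrafilter α) (n : ℕ) (P : List α → Prop) :
    (∀ᶠ l in (powU U (n + 1) : Filter (List α)), P l) ↔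
      ∀ᶠ a in (U : Filter α), ∀ᶠ l in (powU U n : Filter (List α)), P (a :: l) := Iff.rfl

theorem powU_add (U : Ultrafilter α) (m n : ℕ) (P : List α → Prop) :
    (∀ᶠ l in (powU U (m + n) : Filter (List α)), P l) ↔
      ∀ᶠ l in (powU U m : Filter (List α)), ∀ᶠ l' in (powU U n : Filter (List α)),
        P (l ++ l') := by
  induction m generalizing P with
  | zero => rw [Nat.zero_add, powU_zero]; rfl
  | succ m ih =>
    rw [Nat.succ_add, powU_succ, powU_succ]
    simp only [ih, List.cons_append]

theorem powU_length (U : Ultrafilter α) (n : ℕ) :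
    ∀ᶠ l in (powU U n : Filter (List α)), l.length = n := by
  induction n with
  | zero => rw [powU_zero]; rfl
  | succ n ih =>
    rw [powU_succ]
    refine Eventually.of_forall fun a => ih.mono fun l hl => ?_
    simp [hl]

variable {d : ℕ}

/-- Common points of a list of sets. -/
def comK (f : α → Set (EuclideanSpace ℝ (Fin d))) (l : List α) :
    Set (EuclideanSpace ℝ (Fin d)) := {x | ∀ b ∈ l, x ∈ f b}

theorem comK_convex (f : α → Set (EuclideanSpace ℝ (Fin d))) (hf : ∀ a, Convex ℝ (f a))
    (l : List α) : Convex ℝ (comK f l) := by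
  intro x hx y hy a b ha hb hab c hc
  exact hf c (hx c hc) (hy c hc) ha hb hab

theorem comK_closed (f : α → Set (EuclideanSpace ℝ (Fin d))) (hf : ∀ a, IsClosed (f a))
    (l : List α) : IsClosed (comK f l) := by
  have : comK f l = ⋂ b ∈ l, f b := by ext x; simp [comK]
  rw [this]
  exact isClosed_biInter fun b _ => hf b

theorem exists_minpt (K : Set (EuclideanSpace ℝ (Fin d))) :
    ∃ x, IsClosed K → K.Nonempty → x ∈ K ∧ ∀ y ∈ K, ‖x‖ ≤ ‖y‖ := by
  by_cases h : IsClosed K ∧ K.Nonempty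
  · obtain ⟨x, hx, h'⟩ := h.1.exists_infDist_eq_dist h.2 0
    refine ⟨x, fun _ _ => ⟨hx, fun y hy => ?_⟩⟩
    have := Metric.infDist_le_dist_of_mem (x := 0) hy
    rw [h'] at this
    simpa using this
  · exact ⟨0, fun h1 h2 => absurd ⟨h1, h2⟩ h⟩

/-- The point of least norm of a closed nonempty set. -/
noncomputable def minpt (K : Set (EuclideanSpace ℝ (Fin d))) : EuclideanSpace ℝ (Fin d) :=
  Classical.choose (exists_minpt K)

theorem minpt_spec (K : Set (EuclideanSpace ℝ (Fin d))) (h : IsClosed K) (h' : K.Nonempty) :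
    minpt K ∈ K ∧ ∀ y ∈ K, ‖minpt K‖ ≤ ‖y‖ :=
  Classical.choose_spec (exists_minpt K) h h'

theorem min_unique {K : Set (EuclideanSpace ℝ (Fin d))} (hK : Convex ℝ K)
    {x y : EuclideanSpace ℝ (Fin d)} (hx : x ∈ K) (hy : y ∈ K) (hm : ∀ z ∈ K, ‖x‖ ≤ ‖z‖)
    (he : ‖x‖ = ‖y‖) : x = y := by
  by_contra hne
  have h1 := (norm_midpoint_lt_iff he).2 hne
  have h2 : (1 / 2 : ℝ) • (x + y) ∈ K := by
    rw [smul_add]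
    exact hK hx hy (by norm_num) (by norm_num) (by norm_num)
  exact absurd (hm _ h2) (not_le.2 h1)

theorem helly_min (f : α → Set (EuclideanSpace ℝ (Fin d))) (hc : ∀ a, Convex ℝ (f a))
    (hcl : ∀ a, IsClosed (f a)) (l : List α) (hl : l.length = d + 1)
    (hne : (comK f l).Nonempty) :
    ∃ j : Fin (d + 1), ∀ a l₁ l₂, l = l₁ ++ a :: l₂ → l₁.length = (j : ℕ) →
      minpt (comK f (l₁ ++ l₂)) ∈ f a := by
  by_contra hcon
  push Not at hcon
  choose a l₁ l₂ hl₁ hlen hnot using hcon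
  obtain ⟨hx, hxm⟩ := minpt_spec _ (comK_closed f hcl l) hne
  set x := minpt (comK f l) with hxdef
  have hsub : ∀ j, x ∈ comK f (l₁ j ++ l₂ j) := by
    intro j b hb
    apply hx b
    rw [hl₁ j]
    simp at hb ⊢
    tauto
  have hsp := fun j => minpt_spec _ (comK_closed f hcl (l₁ j ++ l₂ j)) ⟨x, hsub j⟩
  have hlt : ∀ j, ‖minpt (comK f (l₁ j ++ l₂ j))‖ < ‖x‖ := by
    intro j
    refine lt_of_le_of_ne ((hsp j).2 x (hsub j)) fun he => hnot j ?_
    rw [min_unique (comK_convex f hc _) (hsp j).1 (hsub j) (hsp j).2 he]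
    apply hx
    rw [hl₁ j]
    simp
  let G : Option (Fin (d + 1)) → Set (EuclideanSpace ℝ (Fin d)) := fun o =>
    match o with
    | none => Metric.ball 0 ‖x‖
    | some j => f (a j)
  have key : (⋂ i ∈ (Finset.univ : Finset (Option (Fin (d + 1)))), G i).Nonempty := by
    apply Convex.helly_theorem' (𝕜 := ℝ)
    · rintro (_ | j) _
      · exact convex_ball _ _
      · exact hc _
    · intro I _ hI
      have hI' : ∃ o, o ∉ I := by
        by_contra hall
        push Not at hall
        have : I = Finset.univ := by ext o; simp [hall o]
        rw [this] at hI
        simp at hI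
      obtain ⟨o, ho⟩ := hI'
      cases o with
      | none =>
        refine ⟨x, Set.mem_iInter₂.2 ?_⟩
        rintro (_ | j) hj
        · exact absurd hj ho
        · apply hx
          rw [hl₁ j]
          simp
      | some k =>
        refine ⟨minpt (comK f (l₁ k ++ l₂ k)), Set.mem_iInter₂.2 ?_⟩
        rintro (_ | j) hj
        · simpa [G] using hlt k
        · have hjk : j ≠ k := by rintro rfl; exact ho hj
          apply (hsp k).1
          have h1 : l[(j : ℕ)]? = some (a j) := by
            rw [hl₁ j, ← hlen j]; simp
          rw [hl₁ k] at h1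
          have hjk' : (j : ℕ) ≠ k := fun h => hjk (Fin.ext h)
          rw [List.mem_append]
          rcases lt_or_gt_of_ne hjk' with h | h
          · left
            rw [List.getElem?_append_left (by rw [hlen]; exact h)] at h1
            exact List.mem_of_getElem? h1
          · right
            rw [List.getElem?_append_right (by rw [hlen]; exact h.le), hlen] at h1
            obtain ⟨m, hm⟩ : ∃ m, (j : ℕ) - k = m + 1 := ⟨j - k - 1, by omega⟩
            rw [hm, List.getElem?_cons_succ] at h1
            exact List.mem_of_getElem? h1
  obtain ⟨y, hy⟩ := key
  simp only [Set.mem_iInter] at hy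
  have hy0 : ‖y‖ < ‖x‖ := by simpa [G] using hy none (Finset.mem_univ _)
  have hyK : y ∈ comK f l := by
    intro b hb
    obtain ⟨n, hn, rfl⟩ := List.getElem_of_mem hb
    have h1 : l[n]? = some (a ⟨n, by omega⟩) := by
      have h2 : ∀ j : Fin (d + 1), l[(j : ℕ)]? = some (a j) := by
        intro j
        rw [hl₁ j, ← hlen j]; simp
      exact h2 ⟨n, by omega⟩
    rw [List.getElem?_eq_getElem hn, Option.some_inj] at h1
    rw [h1]
    exact hy (some ⟨n, by omega⟩) (Finset.mem_univ _)
  exact absurd (hxm y hyK) (not_le.2 hy0)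

theorem generic_empty (U : Ultrafilter α) (f : α → Set (EuclideanSpace ℝ (Fin d)))
    (hc : ∀ a, Convex ℝ (f a)) (hcp : ∀ a, IsCompact (f a))
    (hU : ∀ p, ∀ᶠ a in (U : Filter α), p ∉ f a) :
    ∀ᶠ l in (powU U (d + 1) : Filter (List α)), ¬ (comK f l).Nonempty := by
  rw [Ultrafilter.eventually_not]
  intro hne
  have h1 : ∀ᶠ l in (powU U (d + 1) : Filter (List α)), ∃ j : Fin (d + 1),
      ∀ a l₁ l₂, l = l₁ ++ a :: l₂ → l₁.length = (j : ℕ) → minpt (comK f (l₁ ++ l₂)) ∈ f a := by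
    filter_upwards [hne, powU_length U (d + 1)] with l h2 h3
    exact helly_min f hc (fun a => (hcp a).isClosed) l h3 h2
  have h2 : ∃ j : Fin (d + 1), ∀ᶠ l in (powU U (d + 1) : Filter (List α)),
      ∀ a l₁ l₂, l = l₁ ++ a :: l₂ → l₁.length = (j : ℕ) → minpt (comK f (l₁ ++ l₂)) ∈ f a := by
    by_contra hcon
    have h3 : ∀ j : Fin (d + 1), ∀ᶠ l in (powU U (d + 1) : Filter (List α)),
        ¬ ∀ a l₁ l₂, l = l₁ ++ a :: l₂ → l₁.length = (j : ℕ) →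
          minpt (comK f (l₁ ++ l₂)) ∈ f a := by
      intro j
      rw [Ultrafilter.eventually_not]
      intro h
      exact hcon ⟨j, h⟩
    obtain ⟨l, ⟨j, hj⟩, h6⟩ := (h1.and (eventually_all.2 h3)).exists
    exact h6 j hj
  obtain ⟨⟨j, hjlt⟩, hj⟩ := h2
  simp only at hj
  have hd : d + 1 = j + ((d - j) + 1) := by omega
  generalize hm : d - j = m at hd
  rw [hd, powU_add] at hj
  simp only [powU_succ] at hj
  obtain ⟨l₁, hl₁, hlen⟩ := (hj.and (powU_length U j)).exists
  have h3 : ∀ᶠ a in (U : Filter α), ∀ᶠ l in (powU U m : Filter (List α)),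
      minpt (comK f (l₁ ++ l)) ∈ f a := by
    refine hl₁.mono fun a ha => ha.mono fun l hl => ?_
    exact hl a l₁ l rfl hlen
  obtain ⟨a₀, ha₀⟩ := h3.exists
  let V := (powU U m).map (fun l => minpt (comK f (l₁ ++ l)))
  obtain ⟨q, hq, hVq⟩ := (hcp a₀).ultrafilter_le_nhds V (le_principal_iff.2 ha₀)
  obtain ⟨a, ha, hqa⟩ := (h3.and (hU q)).exists
  exact hqa ((hcp a).isClosed.mem_of_tendsto (show Tendsto
    (fun l => minpt (comK f (l₁ ++ l))) (powU U m : Filter (List α)) (𝓝 q) from hVq) ha)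

theorem generic_step (U : Ultrafilter α) (D : List α → Prop) (d : ℕ) (L : List α)
    (hL : ∀ s, s.Sublist L → s.length ≤ d →
      ∀ᶠ l in (powU U (d - s.length) : Filter (List α)), D (s ++ l)) :
    ∀ᶠ a in (U : Filter α), ∀ s, s.Sublist (L ++ [a]) → s.length ≤ d →
      ∀ᶠ l in (powU U (d - s.length) : Filter (List α)), D (s ++ l) := by
  have h1 : ∀ᶠ a in (U : Filter α), ∀ s ∈ {s | s ∈ L.sublists}, s.length + 1 ≤ d →
      ∀ᶠ l in (powU U (d - (s.length + 1)) : Filter (List α)), D (s ++ a :: l) := by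
    rw [eventually_all_finite (List.finite_toSet _)]
    intro s hs
    rw [eventually_imp_distrib_left]
    intro hlen
    have := hL s (List.mem_sublists.1 hs) (by omega)
    rw [show d - s.length = (d - (s.length + 1)) + 1 by omega, powU_succ] at this
    exact this
  refine h1.mono fun a ha s hs hlen => ?_
  obtain ⟨s₁, s₂, rfl, hs₁, hs₂⟩ := List.sublist_append_iff.1 hs
  rcases List.sublist_singleton.1 hs₂ with rfl | rfl
  · simp only [List.append_nil] at hlen ⊢
    exact hL s₁ hs₁ hlen
  · have := ha s₁ (List.mem_sublists.2 hs₁) (by simpa using hlen)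
    simpa using this

end Aux


/-- **heterochromatic `(ℵ₀, d+1)`-theorem for convex sets.**
Let `F 0, F 1, …` be families of nonempty compact convex subsets of `ℝ^d`. If every
infinite heterochromatic sequence (a sequence `C 0, C 1, …` with `C j ∈ F (i_j)` for some
indices `i_0 < i_1 < …`) contains `d+1` sets with a common point, then some family `F i`
can be pierced by finitely many points. -/
theorem stmt_12 (d : ℕ) (hd : 1 ≤ d)
    (F : ℕ → Set (Set (EuclideanSpace ℝ (Fin d))))
    (hne : ∀ i, ∀ A ∈ F i, A.Nonempty)
    (hcpt : ∀ i, ∀ A ∈ F i, IsCompact A)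
    (hcvx : ∀ i, ∀ A ∈ F i, Convex ℝ A)
    (hyp : ∀ C : ℕ → Set (EuclideanSpace ℝ (Fin d)),
      (∃ idx : ℕ → ℕ, StrictMono idx ∧ ∀ j, C j ∈ F (idx j)) →
      ∃ s : Finset ℕ, s.card = d + 1 ∧
        ∃ x : EuclideanSpace ℝ (Fin d), ∀ j ∈ s, x ∈ C j) :
    ∃ (i : ℕ) (P : Finset (EuclideanSpace ℝ (Fin d))),
      ∀ A ∈ F i, ∃ p ∈ P, p ∈ A := by
  by_contra hcon
  push Not at hcon
  choose A hA hAP using hcon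
  let α := {x : ℕ × Set (EuclideanSpace ℝ (Fin d)) // x.2 ∈ F x.1}
  let f : α → Set (EuclideanSpace ℝ (Fin d)) := fun a => a.1.2
  let g : ℕ × Finset (EuclideanSpace ℝ (Fin d)) → α := fun x => ⟨(x.1, A x.1 x.2), hA x.1 x.2⟩
  let U : Ultrafilter α := Ultrafilter.of (map g atTop)
  have hUle : (U : Filter α) ≤ map g atTop := Ultrafilter.of_le _
  have hU : ∀ p, ∀ᶠ a in (U : Filter α), p ∉ f a := by
    intro p
    apply hUle
    change ∀ᶠ x in atTop, p ∉ f (g x)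
    filter_upwards [eventually_ge_atTop ((0 : ℕ), ({p} : Finset (EuclideanSpace ℝ (Fin d))))]
      with x hx
    exact hAP x.1 x.2 p (hx.2 (Finset.mem_singleton_self p))
  have hUn : ∀ n, ∀ᶠ a in (U : Filter α), n < a.1.1 := by
    intro n
    apply hUle
    change ∀ᶠ x in atTop, n < (g x).1.1
    filter_upwards [eventually_ge_atTop (n + 1, (∅ : Finset (EuclideanSpace ℝ (Fin d))))]
      with x hx
    exact hx.1
  let D : List α → Prop := fun l => ¬ (comK f l).Nonempty
  have hD : ∀ᶠ l in (powU U (d + 1) : Filter (List α)), D l :=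
    generic_empty U f (fun a => hcvx _ _ a.2) (fun a => hcpt _ _ a.2) hU
  let I : List α → Prop := fun L => ∀ s, s.Sublist L → s.length ≤ d + 1 →
      ∀ᶠ l in (powU U (d + 1 - s.length) : Filter (List α)), D (s ++ l)
  have hnil : I [] := by
    intro s hs _
    rw [List.sublist_nil] at hs
    subst hs
    exact hD
  have hstep : ∀ L, ∃ a, I L → I (L ++ [a]) ∧ ∀ b ∈ L, b.1.1 < a.1.1 := by
    intro L
    by_cases hL : I L
    · have h1 := generic_step U D (d + 1) L hL
      have h2 : ∀ᶠ a in (U : Filter α), ∀ b ∈ {b | b ∈ L}, b.1.1 < a.1.1 := by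
        rw [eventually_all_finite (List.finite_toSet _)]
        exact fun b _ => hUn _
      obtain ⟨a, ha⟩ := (h1.and h2).exists
      exact ⟨a, fun _ => ha⟩
    · obtain ⟨a, _⟩ := (hUn 0).exists
      exact ⟨a, fun h => absurd h hL⟩
  choose nx hnx using hstep
  let L : ℕ → List α := fun n => Nat.rec [] (fun _ l => l ++ [nx l]) n
  have hLs : ∀ n, L (n + 1) = L n ++ [nx (L n)] := fun n => rfl
  have hI : ∀ n, I (L n) := by
    intro n
    induction n with
    | zero => exact hnil
    | succ n ih => rw [hLs]; exact (hnx _ ih).1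
  let c : ℕ → α := fun n => nx (L n)
  have hLc : ∀ n, L n = (List.range n).map c := by
    intro n
    induction n with
    | zero => rfl
    | succ n ih => rw [hLs, List.range_succ, List.map_append, ← ih]; rfl
  obtain ⟨s, hs, x, hx⟩ := hyp (fun n => f (c n)) ⟨fun n => (c n).1.1,
    strictMono_nat_of_lt_succ (fun n => (hnx _ (hI (n + 1))).2 _ (by
      rw [hLs]; simp [c])), fun j => (c j).2⟩
  obtain ⟨N, hN⟩ : ∃ N, ∀ j ∈ s, j < N := ⟨s.sup id + 1, fun j hj =>
    Nat.lt_succ_of_le (Finset.le_sup (f := id) hj)⟩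
  let t := (List.range N).filter (fun j => j ∈ s)
  have htlen : t.length = d + 1 := by
    rw [← hs, ← List.toFinset_card_of_nodup (List.nodup_range.filter _)]
    congr 1
    ext j
    simp only [List.mem_toFinset, List.mem_filter, List.mem_range, decide_eq_true_eq]
    exact ⟨fun h => h.2, fun h => ⟨hN j h, h⟩⟩
  have hsubl : (t.map c).Sublist (L N) := by
    rw [hLc]
    exact List.filter_sublist.map c
  have hfin := hI N (t.map c) hsubl (by simp [htlen])
  rw [List.length_map, htlen, Nat.sub_self, powU_zero] at hfin
  apply hfin
  refine ⟨x, ?_⟩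
  intro b hb
  rw [List.append_nil, List.mem_map] at hb
  obtain ⟨j, hj, rfl⟩ := hb
  have : j ∈ s := by simpa using (List.mem_filter.1 hj).2
  exact hx j this
end
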